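/- arXiv:1205.7018 — 5 statements merged into one kernel-verified Lean document; each statement's English description precedes it below -/
import Mathlib

section
/- Let ε > 0 and let I ⊆ ℝ be a bounded nondegenerate interval. For every point (x₁,x₂) ∈ ℝ² the following are equivalent: (a) there exists φ ∈ BMO_ε(I) with ⟨φ⟩_I = x₁ and ⟨φ²⟩_I = x₂; (b) x₁² ≤ x₂ ≤ x₁² + ε², i.e. (x₁,x₂) ∈ Ω_ε. Moreover, if x₂ = x₁², then any φ ∈ BMO_ε(I) with ⟨φ⟩_I = x₁ and ⟨φ²⟩_I = x₂ is equal to x₁ almost everywhere on I; consequently, for every f : ℝ → ℝ, B_ε(x₁, x₁²; f) = f(x₁). -/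
open MeasureTheory Set Real

/-- The average of `φ` over the interval with endpoints `a`, `b`. -/
noncomputable def intAvg (φ : ℝ → ℝ) (a b : ℝ) : ℝ := (∫ t in a..b, φ t) / (b - a)

/-- `φ` belongs to the ball of radius `ε` of (quadratic-norm) BMO on the interval `(l, r)`. -/
def memBMOe (ε l r : ℝ) (φ : ℝ → ℝ) : Prop :=
  IntegrableOn φ (Ioo l r) ∧
  IntegrableOn (fun t => (φ t) ^ 2) (Ioo l r) ∧
  ∀ c d : ℝ, l ≤ c → c < d → d ≤ r →
    intAvg (fun t => (φ t) ^ 2) c d - (intAvg φ c d) ^ 2 ≤ ε ^ 2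

/-- The Bellman function, computed with the interval `I = (0,1)`
(it does not depend on the choice of the interval). -/
noncomputable def bellmanFn (ε : ℝ) (f : ℝ → ℝ) (x₁ x₂ : ℝ) : ℝ :=
  sSup {y | ∃ φ : ℝ → ℝ, memBMOe ε 0 1 φ ∧
    IntegrableOn (fun t => f (φ t)) (Ioo 0 1) ∧
    intAvg φ 0 1 = x₁ ∧ intAvg (fun t => (φ t) ^ 2) 0 1 = x₂ ∧
    y = intAvg (fun t => f (φ t)) 0 1}

/-!
The quantity `⟨φ²⟩_J - ⟨φ⟩_J²` is the variance of `φ` under the uniform probability measure on `J`.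
It is therefore nonnegative, it vanishes only if `φ` is almost everywhere constant on `J`, and it is
at most `ε²` when `φ` stays within `ε` of some number. So the function with the two values `x₁ ± s`,
where `s² = x₂ - x₁²`, each taken on one half of `I`, lies in `BMO_ε(I)` and realizes the point
`(x₁, x₂)`.
-/

open ProbabilityTheory

section Cond

variable {α : Type*} [MeasurableSpace α] {μ : Measure α} {s : Set α}

lemma memLp_cond_of_restrict {E : Type*} [NormedAddCommGroup E] {f : α → E} {p : ENNReal}
    (hs : μ s ≠ 0) (hf : MemLp f p (μ.restrict s)) : MemLp f p μ[|s] :=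
  hf.smul_measure (ENNReal.inv_ne_top.2 hs)

lemma ae_cond_iff_ae_restrict {p : α → Prop} (hs : μ s ≠ ⊤) :
    (∀ᵐ x ∂μ[|s], p x) ↔ ∀ᵐ x ∂μ.restrict s, p x :=
  Measure.ae_ennreal_smul_measure_iff (ENNReal.inv_ne_zero.2 hs)

end Cond

section IntAvg

variable {φ ψ : ℝ → ℝ} {a b : ℝ}

lemma volume_Ioo_ne_zero (hab : a < b) : volume (Ioo a b) ≠ 0 :=
  (isOpen_Ioo.measure_pos volume (nonempty_Ioo.2 hab)).ne'

lemma isProbabilityMeasure_cond_Ioo (hab : a < b) :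
    IsProbabilityMeasure (volume : Measure ℝ)[|Ioo a b] :=
  cond_isProbabilityMeasure_of_finite (volume_Ioo_ne_zero hab) measure_Ioo_lt_top.ne

lemma intAvg_eq_integral_cond (hab : a ≤ b) (φ : ℝ → ℝ) :
    intAvg φ a b = ∫ t, φ t ∂volume[|Ioo a b] := by
  rw [intAvg, ← interval_average_eq_div, uIoc_of_le hab, setAverage_congr Ioo_ae_eq_Ioc.symm,
    setAverage_eq']
  rfl

lemma intAvg_congr_ae (hab : a ≤ b) (h : φ =ᵐ[volume.restrict (Ioo a b)] ψ) :
    intAvg φ a b = intAvg ψ a b := by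
  rw [intAvg_eq_integral_cond hab, intAvg_eq_integral_cond hab]
  exact integral_congr_ae ((ae_cond_iff_ae_restrict measure_Ioo_lt_top.ne).2 h)

lemma intAvg_const (hab : a < b) (c : ℝ) : intAvg (fun _ => c) a b = c := by
  have := isProbabilityMeasure_cond_Ioo hab
  rw [intAvg_eq_integral_cond hab.le, integral_const, probReal_univ, one_smul]

lemma variance_cond_Ioo (hab : a < b) (hφ : MemLp φ 2 (volume.restrict (Ioo a b))) :
    Var[φ; volume[|Ioo a b]] = intAvg (fun t => φ t ^ 2) a b - intAvg φ a b ^ 2 := by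
  have := isProbabilityMeasure_cond_Ioo hab
  rw [variance_eq_sub (memLp_cond_of_restrict (volume_Ioo_ne_zero hab) hφ),
    intAvg_eq_integral_cond hab.le, intAvg_eq_integral_cond hab.le]
  rfl

lemma sq_intAvg_le_intAvg_sq (hab : a < b) (hφ : MemLp φ 2 (volume.restrict (Ioo a b))) :
    intAvg φ a b ^ 2 ≤ intAvg (fun t => φ t ^ 2) a b := by
  rw [← sub_nonneg, ← variance_cond_Ioo hab hφ]
  exact variance_nonneg _ _

lemma ae_eq_intAvg_of_intAvg_sq_eq (hab : a < b) (hφ : MemLp φ 2 (volume.restrict (Ioo a b)))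
    (h : intAvg (fun t => φ t ^ 2) a b = intAvg φ a b ^ 2) :
    ∀ᵐ t ∂volume.restrict (Ioo a b), φ t = intAvg φ a b := by
  have hvar : Var[φ; volume[|Ioo a b]] = 0 := by rw [variance_cond_Ioo hab hφ, h, sub_self]
  rw [intAvg_eq_integral_cond hab.le, ← ae_cond_iff_ae_restrict measure_Ioo_lt_top.ne]
  exact ae_eq_integral_of_variance_eq_zero
    (memLp_cond_of_restrict (volume_Ioo_ne_zero hab) hφ) hvar

lemma intAvg_sq_sub_sq_intAvg_le_of_abs_sub_le {m ε : ℝ} (hab : a < b)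
    (hφ : MemLp φ 2 (volume.restrict (Ioo a b)))
    (hbound : ∀ᵐ t ∂volume.restrict (Ioo a b), |φ t - m| ≤ ε) :
    intAvg (fun t => φ t ^ 2) a b - intAvg φ a b ^ 2 ≤ ε ^ 2 := by
  have := isProbabilityMeasure_cond_Ioo hab
  have hmem : ∀ᵐ t ∂volume[|Ioo a b], φ t ∈ Icc (m - ε) (m + ε) := by
    filter_upwards [(ae_cond_iff_ae_restrict measure_Ioo_lt_top.ne).2 hbound] with t ht
    exact mem_Icc_iff_abs_le.1 (abs_sub_comm m (φ t) ▸ ht)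
  have hmeas : AEMeasurable φ volume[|Ioo a b] :=
    (memLp_cond_of_restrict (volume_Ioo_ne_zero hab) hφ).aemeasurable
  calc intAvg (fun t => φ t ^ 2) a b - intAvg φ a b ^ 2
      = Var[φ; volume[|Ioo a b]] := (variance_cond_Ioo hab hφ).symm
    _ ≤ ((m + ε - (m - ε)) / 2) ^ 2 := variance_le_sq_of_bounded hmem hmeas
    _ = ε ^ 2 := by ring

end IntAvg

section BMO

variable {φ : ℝ → ℝ} {ε l r m : ℝ}

lemma memBMOe.memLp_two (h : memBMOe ε l r φ) : MemLp φ 2 (volume.restrict (Ioo l r)) :=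
  (memLp_two_iff_integrable_sq h.1.aestronglyMeasurable).2 h.2.1

lemma memBMOe_of_abs_sub_le (hmeas : AEStronglyMeasurable φ (volume.restrict (Ioo l r)))
    (hbound : ∀ᵐ t ∂volume.restrict (Ioo l r), |φ t - m| ≤ ε) : memBMOe ε l r φ := by
  have hnorm : ∀ᵐ t ∂volume.restrict (Ioo l r), ‖φ t‖ ≤ |m| + ε := by
    filter_upwards [hbound] with t ht
    rw [Real.norm_eq_abs]
    linarith [abs_sub_abs_le_abs_sub (φ t) m]
  have hLp : MemLp φ 2 (volume.restrict (Ioo l r)) := MemLp.of_bound hmeas _ hnorm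
  refine ⟨hLp.integrable one_le_two, hLp.integrable_sq, fun c d hc hcd hd => ?_⟩
  have hsub : volume.restrict (Ioo c d) ≤ volume.restrict (Ioo l r) :=
    Measure.restrict_mono (Ioo_subset_Ioo hc hd) le_rfl
  exact intAvg_sq_sub_sq_intAvg_le_of_abs_sub_le hcd (hLp.mono_measure hsub)
    (ae_mono hsub hbound)

lemma memBMOe_const (hε : 0 ≤ ε) (l r m : ℝ) : memBMOe ε l r (fun _ => m) :=
  memBMOe_of_abs_sub_le (m := m) aestronglyMeasurable_const (.of_forall fun _ => by simpa using hε)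

end BMO

/-- The step function with value `u` on `(-∞, c]` and `v` on `(c, ∞)`; with `c` the midpoint of an
interval it is the two-valued function realizing a prescribed pair of averages there. -/
noncomputable def stepFn (c u v : ℝ) : ℝ → ℝ := (Iic c).piecewise (fun _ => u) (fun _ => v)

section StepFn

variable {l r c u v : ℝ}

lemma measurable_stepFn : Measurable (stepFn c u v) :=
  measurable_const.piecewise measurableSet_Iic measurable_const

lemma comp_stepFn (f : ℝ → ℝ) : (fun t => f (stepFn c u v t)) = stepFn c (f u) (f v) := by
  ext t
  exact apply_piecewise (Iic c) _ _ (fun _ => f)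

lemma integral_stepFn (hc : c ∈ Icc l r) :
    ∫ t in l..r, stepFn c u v t = u * (c - l) + v * (r - c) := by
  have hdecomp : stepFn c u v = fun t => {t | t ≤ c}.indicator (fun _ => u - v) t + v := by
    ext t
    by_cases ht : t ≤ c <;> simp [stepFn, ht]
  have hind : IntervalIntegrable ({t | t ≤ c}.indicator fun _ => u - v) volume l r :=
    intervalIntegrable_iff.2
      ((intervalIntegrable_iff.1 intervalIntegrable_const).indicator measurableSet_Iic)
  rw [hdecomp, intervalIntegral.integral_add hind intervalIntegrable_const,
    intervalIntegral.integral_indicator hc, intervalIntegral.integral_const,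
    intervalIntegral.integral_const, smul_eq_mul, smul_eq_mul]
  ring

lemma intAvg_stepFn_midpoint (hlr : l < r) :
    intAvg (stepFn ((l + r) / 2) u v) l r = (u + v) / 2 := by
  rw [intAvg, integral_stepFn ⟨by linarith, by linarith⟩, div_eq_iff (sub_pos.2 hlr).ne']
  ring

lemma memBMOe_stepFn_add_sub {ε s : ℝ} (hs : |s| ≤ ε) (l r c m : ℝ) :
    memBMOe ε l r (stepFn c (m + s) (m - s)) := by
  refine memBMOe_of_abs_sub_le (m := m) measurable_stepFn.aestronglyMeasurable (.of_forall ?_)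
  intro t
  by_cases ht : t ≤ c <;> simpa [stepFn, ht] using hs

end StepFn

lemma exists_memBMOe_intAvg_eq {ε l r x₁ x₂ : ℝ} (hε : 0 ≤ ε) (hlr : l < r) (hlower : x₁ ^ 2 ≤ x₂)
    (hupper : x₂ ≤ x₁ ^ 2 + ε ^ 2) :
    ∃ φ : ℝ → ℝ, memBMOe ε l r φ ∧ intAvg φ l r = x₁ ∧ intAvg (fun t => φ t ^ 2) l r = x₂ := by
  set s := √(x₂ - x₁ ^ 2)
  have hs_sq : s ^ 2 = x₂ - x₁ ^ 2 := Real.sq_sqrt (sub_nonneg.2 hlower)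
  have hs_le : |s| ≤ ε := abs_le_of_sq_le_sq (by linarith) hε
  refine ⟨stepFn ((l + r) / 2) (x₁ + s) (x₁ - s), memBMOe_stepFn_add_sub hs_le _ _ _ _, ?_, ?_⟩
  · rw [intAvg_stepFn_midpoint hlr]
    ring
  · rw [comp_stepFn (· ^ 2), intAvg_stepFn_midpoint hlr]
    linear_combination hs_sq

lemma bellmanFn_sq {ε : ℝ} (hε : 0 ≤ ε) (f : ℝ → ℝ) (x : ℝ) : bellmanFn ε f x (x ^ 2) = f x := by
  refine (congrArg sSup (Set.ext fun y => ⟨?_, ?_⟩)).trans (csSup_singleton (f x))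
  · rintro ⟨φ, hφ, -, rfl, hsq, rfl⟩
    have hconst := ae_eq_intAvg_of_intAvg_sq_eq one_pos hφ.memLp_two hsq
    calc intAvg (fun t => f (φ t)) 0 1
        = intAvg (fun _ => f (intAvg φ 0 1)) 0 1 :=
          intAvg_congr_ae zero_le_one (hconst.mono fun _ ht => congrArg f ht)
      _ = f (intAvg φ 0 1) := intAvg_const one_pos _
  · rintro rfl
    exact ⟨fun _ => x, memBMOe_const hε 0 1 x, integrable_const _, intAvg_const one_pos _,
      intAvg_const one_pos _, (intAvg_const one_pos _).symm⟩

theorem stmt0 (ε : ℝ) (hε : 0 < ε) (l r : ℝ) (hlr : l < r) (x₁ x₂ : ℝ) :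
    ((∃ φ : ℝ → ℝ, memBMOe ε l r φ ∧ intAvg φ l r = x₁ ∧
        intAvg (fun t => (φ t) ^ 2) l r = x₂) ↔
      (x₁ ^ 2 ≤ x₂ ∧ x₂ ≤ x₁ ^ 2 + ε ^ 2)) ∧
    (x₂ = x₁ ^ 2 →
      ∀ φ : ℝ → ℝ, memBMOe ε l r φ → intAvg φ l r = x₁ →
        intAvg (fun t => (φ t) ^ 2) l r = x₂ →
        ∀ᵐ t ∂volume.restrict (Ioo l r), φ t = x₁) ∧
    (∀ f : ℝ → ℝ, bellmanFn ε f x₁ (x₁ ^ 2) = f x₁) := by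
  refine ⟨⟨?_, fun h => exists_memBMOe_intAvg_eq hε.le hlr h.1 h.2⟩, ?_, (bellmanFn_sq hε.le · x₁)⟩
  · rintro ⟨φ, hφ, rfl, rfl⟩
    exact ⟨sq_intAvg_le_intAvg_sq hlr hφ.memLp_two,
      sub_le_iff_le_add'.1 (hφ.2.2 l r le_rfl hlr le_rfl)⟩
  · rintro rfl φ hφ rfl hsq
    exact ae_eq_intAvg_of_intAvg_sq_eq hlr hφ.memLp_two hsq
end

section
/- Let ε₀ > 0 and let f ∈ 𝔚_{ε₀}. Then for r = 0, 1, 2 one has f^{(r)}(u)·e^{−|u|/ε₀} → 0 as u → +∞ and also as u → −∞. -/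
open MeasureTheory Set Real

/-- The class `𝔚_{ε₀}`: `f` is twice continuously differentiable, `f''` is locally absolutely
continuous with a.e. derivative `f3` (= `f'''`), and `f⁽ʳ⁾(t)·e^{−|t|/ε₀}` is integrable for
`r = 0, 1, 2, 3`. -/
def memWcl (ε₀ : ℝ) (f f3 : ℝ → ℝ) : Prop :=
  ContDiff ℝ 2 f ∧
  (∀ x y : ℝ, x ≤ y → deriv (deriv f) y - deriv (deriv f) x = ∫ t in x..y, f3 t) ∧
  Integrable (fun t => f t * Real.exp (-|t| / ε₀)) ∧
  Integrable (fun t => deriv f t * Real.exp (-|t| / ε₀)) ∧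
  Integrable (fun t => deriv (deriv f) t * Real.exp (-|t| / ε₀)) ∧
  Integrable (fun t => f3 t * Real.exp (-|t| / ε₀))

/-!
Let `g` be a primitive of `h`. The weight `w` loses at most a constant factor `C` over a unit step,
so on `[u, u + 1]` one may trade `w u` for `C * w t`. Averaging `g u = g t - ∫ s in u..t, h s` over
`t ∈ [u, u + 1]` bounds `w u • g u` by the integrals of `C * ‖w • g‖` and `C * ‖w • h‖` over
`[u, u + 1]`, and these vanish at infinity because both functions are integrable on the line.
-/

open Filter Topology

section

variable {E : Type*} [NormedAddCommGroup E] [NormedSpace ℝ E]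

theorem tendsto_intervalIntegral_add_cocompact {k : ℝ → E} (hk : Integrable k) (a : ℝ) :
    Tendsto (fun u => ∫ t in u..u + a, k t) (cocompact ℝ) (𝓝 0) := by
  have hk' (x y : ℝ) : IntervalIntegrable k volume x y := hk.intervalIntegrable
  rw [cocompact_eq_atBot_atTop, tendsto_sup]
  constructor
  · have hdiff := (intervalIntegral_tendsto_integral_Iic 0 hk.integrableOn tendsto_id).sub
      (intervalIntegral_tendsto_integral_Iic 0 hk.integrableOn
        (tendsto_atBot_add_const_right atBot a tendsto_id))
    rw [sub_self] at hdiff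
    exact hdiff.congr fun u => sub_eq_iff_eq_add.2
      (intervalIntegral.integral_add_adjacent_intervals (hk' _ _) (hk' _ _)).symm
  · have hdiff := (intervalIntegral_tendsto_integral_Ioi 0 hk.integrableOn
        (tendsto_atTop_add_const_right atTop a tendsto_id)).sub
      (intervalIntegral_tendsto_integral_Ioi 0 hk.integrableOn tendsto_id)
    rw [sub_self] at hdiff
    exact hdiff.congr fun u => intervalIntegral.integral_interval_sub_left (hk' _ _) (hk' _ _)

theorem intervalIntegral_iteratedDeriv_succ [CompleteSpace E] {n r : ℕ} {f : ℝ → E}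
    (hf : ContDiff ℝ n f) (hr : r < n) (x y : ℝ) :
    ∫ t in x..y, iteratedDeriv (r + 1) f t = iteratedDeriv r f y - iteratedDeriv r f x := by
  have hcont : Continuous (iteratedDeriv (r + 1) f) :=
    hf.continuous_iteratedDeriv _ (by exact_mod_cast hr)
  rw [iteratedDeriv_succ] at hcont ⊢
  exact intervalIntegral.integral_deriv_eq_sub
    (fun t _ => hf.differentiable_iteratedDeriv r (by exact_mod_cast hr) t)
    (hcont.intervalIntegrable x y)

/-- Weights `w` that lose at most a factor `C` over a step of length at most one to the right. The
norms allow `w` of any sign; the exponential of a Lipschitz function is the main example. -/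
def UnitStepBounded (C : ℝ) (w : ℝ → ℝ) : Prop :=
  ∀ u, ∀ t ∈ Icc u (u + 1), ‖w u‖ ≤ C * ‖w t‖

theorem unitStepBounded_exp_comp {φ : ℝ → ℝ} {K : NNReal} (hφ : LipschitzWith K φ) :
    UnitStepBounded (exp K) fun t => exp (φ t) := by
  intro u t ht
  have hdist : dist u t ≤ 1 := by
    rw [Real.dist_eq, abs_le]
    constructor <;> linarith [ht.1, ht.2]
  have hle : φ u - φ t ≤ K :=
    calc φ u - φ t ≤ dist (φ u) (φ t) := le_abs_self _
      _ ≤ K * dist u t := hφ.dist_le_mul u t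
      _ ≤ K := mul_le_of_le_one_right K.2 hdist
  rw [norm_of_nonneg (exp_nonneg _), norm_of_nonneg (exp_nonneg _), ← exp_add, exp_le_exp]
  linarith

theorem lipschitzWith_neg_abs_div (c : ℝ) : LipschitzWith ‖c⁻¹‖₊ fun t : ℝ => -|t| / c := by
  refine LipschitzWith.of_dist_le_mul fun x y => ?_
  have hfactor : -|x| / c - -|y| / c = -(c⁻¹ * (|x| - |y|)) := by ring
  rw [Real.dist_eq, Real.dist_eq, hfactor, abs_neg, abs_mul]
  exact mul_le_mul_of_nonneg_left (abs_abs_sub_abs_le x y) (abs_nonneg c⁻¹)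

namespace UnitStepBounded

variable {w : ℝ → ℝ} {C : ℝ} {g h : ℝ → E}

theorem norm_smul_le (hw : UnitStepBounded C w) {u t : ℝ} (ht : t ∈ Icc u (u + 1)) (v : E) :
    ‖w u • v‖ ≤ C * ‖w t • v‖ := by
  rw [norm_smul, norm_smul, ← mul_assoc]
  exact mul_le_mul_of_nonneg_right (hw u t ht) (norm_nonneg v)

theorem norm_smul_sub_le_integral (hw : UnitStepBounded C w)
    (hgh : ∀ x y, x ≤ y → g y - g x = ∫ t in x..y, h t)
    (hh : Integrable fun t => w t • h t) {u t : ℝ} (ht : t ∈ Icc u (u + 1)) :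
    ‖w u • (g t - g u)‖ ≤ ∫ s in u..u + 1, C * ‖w s • h s‖ := by
  have hint (x y : ℝ) : IntervalIntegrable (fun s => C * ‖w s • h s‖) volume x y :=
    (hh.norm.const_mul C).intervalIntegrable
  have hnonneg (s : ℝ) : 0 ≤ C * ‖w s • h s‖ :=
    (norm_nonneg _).trans (hw.norm_smul_le ⟨le_rfl, by linarith⟩ (h s))
  calc ‖w u • (g t - g u)‖ = ‖∫ s in u..t, w u • h s‖ := by
        rw [hgh u t ht.1, intervalIntegral.integral_smul]
    _ ≤ ∫ s in u..t, C * ‖w s • h s‖ :=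
        intervalIntegral.norm_integral_le_of_norm_le ht.1
          (ae_of_all _ fun s hs => hw.norm_smul_le ⟨hs.1.le, hs.2.trans ht.2⟩ (h s))
          (hint u t)
    _ ≤ ∫ s in u..u + 1, C * ‖w s • h s‖ :=
        intervalIntegral.integral_mono_interval le_rfl ht.1 ht.2 (ae_of_all _ hnonneg)
          (hint u (u + 1))

theorem norm_smul_le_integral_add_integral (hw : UnitStepBounded C w)
    (hgh : ∀ x y, x ≤ y → g y - g x = ∫ t in x..y, h t)
    (hg : Integrable fun t => w t • g t) (hh : Integrable fun t => w t • h t) (u : ℝ) :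
    ‖w u • g u‖ ≤ (∫ t in u..u + 1, C * ‖w t • g t‖) + ∫ t in u..u + 1, C * ‖w t • h t‖ := by
  set J := ∫ t in u..u + 1, C * ‖w t • h t‖
  have hg' : IntervalIntegrable (fun t => C * ‖w t • g t‖) volume u (u + 1) :=
    (hg.norm.const_mul C).intervalIntegrable
  have hpointwise : ∀ t ∈ Icc u (u + 1), ‖w u • g u‖ ≤ C * ‖w t • g t‖ + J := fun t ht =>
    calc ‖w u • g u‖ = ‖w u • g t - w u • (g t - g u)‖ := by rw [← smul_sub, sub_sub_cancel]
      _ ≤ ‖w u • g t‖ + ‖w u • (g t - g u)‖ := norm_sub_le _ _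
      _ ≤ C * ‖w t • g t‖ + J :=
          add_le_add (hw.norm_smul_le ht (g t)) (hw.norm_smul_sub_le_integral hgh hh ht)
  calc ‖w u • g u‖ = ∫ _ in u..u + 1, ‖w u • g u‖ := by simp
    _ ≤ ∫ t in u..u + 1, (C * ‖w t • g t‖ + J) :=
        intervalIntegral.integral_mono_on (by linarith) intervalIntegrable_const
          (hg'.add intervalIntegrable_const) hpointwise
    _ = (∫ t in u..u + 1, C * ‖w t • g t‖) + J := by
        rw [intervalIntegral.integral_add hg' intervalIntegrable_const]
        simp

theorem tendsto_smul_cocompact_zero (hw : UnitStepBounded C w)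
    (hgh : ∀ x y, x ≤ y → g y - g x = ∫ t in x..y, h t)
    (hg : Integrable fun t => w t • g t) (hh : Integrable fun t => w t • h t) :
    Tendsto (fun u => w u • g u) (cocompact ℝ) (𝓝 0) := by
  have hlim := (tendsto_intervalIntegral_add_cocompact (hg.norm.const_mul C) 1).add
    (tendsto_intervalIntegral_add_cocompact (hh.norm.const_mul C) 1)
  rw [add_zero] at hlim
  exact squeeze_zero_norm (hw.norm_smul_le_integral_add_integral hgh hg hh) hlim

end UnitStepBounded

theorem stmt3_general [CompleteSpace E] {n : ℕ} {w : ℝ → ℝ} {C : ℝ}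
    (hw : UnitStepBounded C w) {f F : ℝ → E} (hf : ContDiff ℝ n f)
    (hF : ∀ x y, x ≤ y → iteratedDeriv n f y - iteratedDeriv n f x = ∫ t in x..y, F t)
    (hfint : ∀ r ≤ n, Integrable fun t => w t • iteratedDeriv r f t)
    (hFint : Integrable fun t => w t • F t) :
    ∀ r ≤ n, Tendsto (fun u => w u • iteratedDeriv r f u) (cocompact ℝ) (𝓝 0) := by
  intro r hr
  rcases hr.lt_or_eq with hlt | rfl
  · exact hw.tendsto_smul_cocompact_zero
      (fun x y _ => (intervalIntegral_iteratedDeriv_succ hf hlt x y).symm)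
      (hfint r hr) (hfint (r + 1) hlt)
  · exact hw.tendsto_smul_cocompact_zero hF (hfint r le_rfl) hFint

end

theorem stmt3 (ε₀ : ℝ) (hε₀ : 0 < ε₀) (f f3 : ℝ → ℝ) (hf : memWcl ε₀ f f3) :
    Filter.Tendsto (fun u => f u * Real.exp (-|u| / ε₀)) Filter.atTop (nhds 0) ∧
    Filter.Tendsto (fun u => f u * Real.exp (-|u| / ε₀)) Filter.atBot (nhds 0) ∧
    Filter.Tendsto (fun u => deriv f u * Real.exp (-|u| / ε₀)) Filter.atTop (nhds 0) ∧
    Filter.Tendsto (fun u => deriv f u * Real.exp (-|u| / ε₀)) Filter.atBot (nhds 0) ∧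
    Filter.Tendsto (fun u => deriv (deriv f) u * Real.exp (-|u| / ε₀)) Filter.atTop (nhds 0) ∧
    Filter.Tendsto (fun u => deriv (deriv f) u * Real.exp (-|u| / ε₀)) Filter.atBot (nhds 0) := by
  obtain ⟨hC2, hf3, h0, h1, h2, h3⟩ := hf
  simp only [mul_comm _ (Real.exp _)] at h0 h1 h2 h3 ⊢
  have hlim := stmt3_general (n := 2) (unitStepBounded_exp_comp (lipschitzWith_neg_abs_div ε₀)) hC2
    (by simpa only [iteratedDeriv_succ, iteratedDeriv_zero] using hf3)
    (fun r hr => by interval_cases r <;> simpa only [iteratedDeriv_succ, iteratedDeriv_zero]) h3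
  simp only [cocompact_eq_atBot_atTop, tendsto_sup] at hlim
  have hlim0 := hlim 0 (by simp)
  have hlim1 := hlim 1 (by simp)
  have hlim2 := hlim 2 (by simp)
  simp only [iteratedDeriv_succ, iteratedDeriv_zero, smul_eq_mul] at hlim0 hlim1 hlim2
  exact ⟨hlim0.2, hlim0.1, hlim1.2, hlim1.1, hlim2.2, hlim2.1⟩
end

section
/- Let Ω ⊆ ℝ² be an open set and let G : Ω → ℝ be twice continuously differentiable with G_{x₁x₁}G_{x₂x₂} − (G_{x₁x₂})² = 0 at every point of Ω, and suppose that at every point of Ω at least one of G_{x₁x₁}, G_{x₂x₂} is nonzero. Let γ : (α,β) → Ω be a C¹ curve such that for every s ∈ (α,β), γ'(s) ≠ 0 and the Hessian matrix of G at γ(s) annihilates γ'(s). Then the functions s ↦ G_{x₁}(γ(s)), s ↦ G_{x₂}(γ(s)), and s ↦ G(γ(s)) − G_{x₁}(γ(s))·γ₁(s) − G_{x₂}(γ(s))·γ₂(s) are constant on (α,β), and the image of γ is contained in a straight line. -/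
open Set

/-- First partial derivative in `x₁`. -/
noncomputable def pd1 (G : ℝ × ℝ → ℝ) (x : ℝ × ℝ) : ℝ := fderiv ℝ G x (1, 0)

/-- First partial derivative in `x₂`. -/
noncomputable def pd2 (G : ℝ × ℝ → ℝ) (x : ℝ × ℝ) : ℝ := fderiv ℝ G x (0, 1)

/-- Second partial derivative `G_{x₁x₁}`. -/
noncomputable def pd11 (G : ℝ × ℝ → ℝ) (x : ℝ × ℝ) : ℝ := fderiv ℝ (pd1 G) x (1, 0)

/-- Second partial derivative `G_{x₁x₂}`. -/
noncomputable def pd12 (G : ℝ × ℝ → ℝ) (x : ℝ × ℝ) : ℝ := fderiv ℝ (pd1 G) x (0, 1)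

/-- Second partial derivative `G_{x₂x₁}`. -/
noncomputable def pd21 (G : ℝ × ℝ → ℝ) (x : ℝ × ℝ) : ℝ := fderiv ℝ (pd2 G) x (1, 0)

/-- Second partial derivative `G_{x₂x₂}`. -/
noncomputable def pd22 (G : ℝ × ℝ → ℝ) (x : ℝ × ℝ) : ℝ := fderiv ℝ (pd2 G) x (0, 1)

/-!
Along a curve `γ` with `γ'` in the kernel of the Hessian of `G`, the gradient is constant, and so is
the intercept `G - ∇G · x`, because `d(G - ∇G · x) = -x · d(∇G)`.

To see that `γ` is straight, use that the Hessian has constant rank. By the constant rank theorem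
`∇G = φ ∘ P ∘ ∇G` near each point, where `P` projects onto the range of the Hessian at that point;
differentiating, the range of the Hessian is the range of `Dφ` at `P (∇G)`, so it is locally
determined by the value of `∇G` and hence constant along `γ`. The Hessian being symmetric, its
kernel is the annihilator of its range, so the kernel too is constant along `γ`. Thus `γ'` stays in
a fixed subspace `V`, and `γ` in a translate of `V`. In the plane, the Monge–Ampère equation and
the nondegeneracy say that the rank is one, so `V` is a line.
-/

open Filter Module Topology

section FunctionalDependence

variable {X E F H : Type*} [NormedAddCommGroup X] [NormedSpace ℝ X]
  [NormedAddCommGroup E] [NormedSpace ℝ E] [NormedAddCommGroup F] [NormedSpace ℝ F]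
  [NormedAddCommGroup H] [NormedSpace ℝ H]

theorem eq_of_hasDerivAt_zero {I : Set ℝ} (hI : IsOpen I) (hI' : IsPreconnected I) {u : ℝ → H}
    (hu : ∀ t ∈ I, HasDerivAt u 0 t) {s t : ℝ} (hs : s ∈ I) (ht : t ∈ I) : u s = u t :=
  hI.is_const_of_deriv_eq_zero hI'
    (fun r hr ↦ (hu r hr).differentiableAt.differentiableWithinAt)
    (fun r hr ↦ (hu r hr).deriv) hs ht

theorem eq_of_ker_le_ker_fderiv {U : Set E} (hU : IsOpen U) (hU' : Convex ℝ U) {h : E → H}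
    (hh : DifferentiableOn ℝ h U) (L : E →L[ℝ] F) (hker : ∀ x ∈ U, L.ker ≤ (fderiv ℝ h x).ker)
    {x y : E} (hx : x ∈ U) (hy : y ∈ U) (hxy : L x = L y) : h x = h y := by
  let line : ℝ →ᵃ[ℝ] E := AffineMap.lineMap x y
  have hline : Continuous line := AffineMap.lineMap_continuous
  have hderiv : ∀ t ∈ line ⁻¹' U, HasDerivAt (h ∘ line) 0 t := fun t ht ↦ by
    have hdir : fderiv ℝ h (line t) (y - x) = 0 :=
      hker _ ht (by simp [LinearMap.mem_ker, hxy])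
    have hcomp := ((hh.differentiableAt (hU.mem_nhds ht)).hasFDerivAt).comp_hasDerivAt t
      (AffineMap.hasDerivAt_lineMap (a := x) (b := y))
    exact hdir ▸ hcomp
  simpa [line] using eq_of_hasDerivAt_zero (hU.preimage hline)
    (hU'.affine_preimage line).isPreconnected hderiv (s := 0) (t := 1)
    (by simpa [line] using hx) (by simpa [line] using hy)

theorem exists_straightening [CompleteSpace E] {n : WithTop ℕ∞} (hn : n ≠ 0) {f : E → F} {x₀ : E}
    (hf : ContDiffAt ℝ n f x₀) {R : F →L[ℝ] E}
    (hR : (fderiv ℝ f x₀).comp R = ContinuousLinearMap.id ℝ F) :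
    ∃ Ψ : E → E, ContDiffAt ℝ n Ψ x₀ ∧ Ψ x₀ = x₀ ∧ map Ψ (𝓝 x₀) = 𝓝 x₀ ∧
      ∀ᶠ z in 𝓝 x₀, f (Ψ z) = f x₀ + fderiv ℝ f x₀ (z - x₀) := by
  set L := fderiv ℝ f x₀
  have hLR : ∀ y, L (R y) = y := fun y ↦ DFunLike.congr_fun hR y
  -- The correction term has zero derivative at `x₀`, and `L` maps `Φ x - x₀` to `f x - f x₀`.
  let Φ : E → E := fun x ↦ x + R (f x - f x₀ - L (x - x₀))
  have hΦx₀ : Φ x₀ = x₀ := by simp [Φ]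
  have hLΦ : ∀ x, f x = f x₀ + L (Φ x - x₀) := fun x ↦ by
    simp only [Φ, map_sub, map_add, hLR]
    abel
  have hΦ : ContDiffAt ℝ n Φ x₀ := by fun_prop
  have hΦ' : HasFDerivAt Φ (ContinuousLinearEquiv.refl ℝ E : E →L[ℝ] E) x₀ := by
    have hLx : HasFDerivAt (fun x ↦ L (x - x₀)) L x₀ :=
      L.hasFDerivAt.comp x₀ (hasFDerivAt_sub_const x₀)
    have hres : HasFDerivAt (fun x ↦ f x - f x₀ - L (x - x₀)) (L - L) x₀ :=
      ((hf.differentiableAt hn).hasFDerivAt.sub_const (f x₀)).sub hLx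
    refine ((hasFDerivAt_id x₀).add (R.hasFDerivAt.comp x₀ hres)).congr_fderiv ?_
    ext v
    simp
  have hstrict := hΦ.hasStrictFDerivAt' hΦ' hn
  refine ⟨hΦ.localInverse hΦ' hn, ?_, ?_, ?_, ?_⟩
  · simpa only [hΦx₀] using hΦ.to_localInverse hΦ' hn
  · simpa only [hΦx₀] using hΦ.localInverse_apply_image hΦ' hn
  · have hmap := hstrict.to_localInverse.map_nhds_eq_of_equiv
    rw [hstrict.localInverse_apply_image, hΦx₀] at hmap
    exact hmap
  · have hright := hstrict.eventually_right_inverse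
    rw [hΦx₀] at hright
    filter_upwards [hright] with z hz
    rw [hLΦ]
    exact congrArg (fun w ↦ f x₀ + L (w - x₀)) hz

theorem eventually_eq_rightInverse_of_ker_le_ker_fderiv {h : E → H} {x₀ : E} {L : E →L[ℝ] F}
    {R : F →L[ℝ] E} (hR : L.comp R = ContinuousLinearMap.id ℝ F)
    (hh : ∀ᶠ z in 𝓝 x₀, DifferentiableAt ℝ h z)
    (hker : ∀ᶠ z in 𝓝 x₀, L.ker ≤ (fderiv ℝ h z).ker) :
    ∀ᶠ z in 𝓝 x₀, h z = h (x₀ + R (L (z - x₀))) := by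
  obtain ⟨r, hr, hball⟩ := Metric.eventually_nhds_iff_ball.1 (hh.and hker)
  have hproj : Tendsto (fun z ↦ x₀ + R (L (z - x₀))) (𝓝 x₀) (𝓝 x₀) := by
    have : Continuous fun z ↦ x₀ + R (L (z - x₀)) := by fun_prop
    simpa using this.tendsto x₀
  filter_upwards [Metric.ball_mem_nhds x₀ hr, hproj (Metric.ball_mem_nhds x₀ hr)] with z hz hz'
  have hL : L z = L (x₀ + R (L (z - x₀))) := by
    simp [show ∀ y, L (R y) = y from DFunLike.congr_fun hR]
  exact eq_of_ker_le_ker_fderiv Metric.isOpen_ball (convex_ball x₀ r)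
    (fun w hw ↦ (hball w hw).1.differentiableWithinAt) L (fun w hw ↦ (hball w hw).2) hz hz' hL

theorem eventually_differentiableAt_of_contDiffAt {n : WithTop ℕ∞} (hn : n ≠ 0) {f : E → F}
    {x : E} (hf : ContDiffAt ℝ n f x) : ∀ᶠ y in 𝓝 x, DifferentiableAt ℝ f y :=
  ((hf.of_le (ENat.one_le_iff_ne_zero_withTop.2 hn)).eventually (by simp)).mono
    fun _ hy ↦ hy.differentiableAt one_ne_zero

theorem ker_fderiv_comp_le_ker_fderiv_comp {Ψ : X → E} {f : E → F} {g : E → H} {z : X}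
    (hΨ : DifferentiableAt ℝ Ψ z) (hf : DifferentiableAt ℝ f (Ψ z))
    (hg : DifferentiableAt ℝ g (Ψ z)) (hker : (fderiv ℝ f (Ψ z)).ker ≤ (fderiv ℝ g (Ψ z)).ker) :
    (fderiv ℝ (f ∘ Ψ) z).ker ≤ (fderiv ℝ (g ∘ Ψ) z).ker := by
  rw [fderiv_comp z hf hΨ, fderiv_comp z hg hΨ]
  exact fun v hv ↦ hker hv

theorem exists_eventuallyEq_comp_of_ker_fderiv_le [CompleteSpace E] {n : WithTop ℕ∞} (hn : n ≠ 0)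
    {f : E → F} {g : E → H} {x₀ : E} (hf : ContDiffAt ℝ n f x₀) (hg : ContDiffAt ℝ n g x₀)
    {R : F →L[ℝ] E} (hR : (fderiv ℝ f x₀).comp R = ContinuousLinearMap.id ℝ F)
    (hker : ∀ᶠ x in 𝓝 x₀, (fderiv ℝ f x).ker ≤ (fderiv ℝ g x).ker) :
    ∃ φ : F → H, ContDiffAt ℝ n φ (f x₀) ∧ g =ᶠ[𝓝 x₀] φ ∘ f := by
  obtain ⟨Ψ, hΨ, hΨx₀, hmap, hfΨ⟩ := exists_straightening hn hf hR
  have hΨt : Tendsto Ψ (𝓝 x₀) (𝓝 x₀) := hmap.le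
  have hgΨ : ContDiffAt ℝ n (g ∘ Ψ) x₀ := (hΨx₀.symm ▸ hg).comp x₀ hΨ
  have hkerΨ : ∀ᶠ z in 𝓝 x₀, (fderiv ℝ f x₀).ker ≤ (fderiv ℝ (g ∘ Ψ) z).ker := by
    filter_upwards [hfΨ.eventually_nhds, eventually_differentiableAt_of_contDiffAt hn hΨ,
      hΨt (eventually_differentiableAt_of_contDiffAt hn hf),
      hΨt (eventually_differentiableAt_of_contDiffAt hn hg), hΨt hker] with z hz hΨz hfz hgz hkerz
    have haffine : HasFDerivAt (fun w ↦ f x₀ + fderiv ℝ f x₀ (w - x₀)) (fderiv ℝ f x₀) z :=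
      ((fderiv ℝ f x₀).hasFDerivAt.comp z (hasFDerivAt_sub_const x₀)).const_add (f x₀)
    have hfΨz : fderiv ℝ (f ∘ Ψ) z = fderiv ℝ f x₀ := (haffine.congr_of_eventuallyEq hz).fderiv
    exact hfΨz ▸ ker_fderiv_comp_le_ker_fderiv_comp hΨz hfz hgz hkerz
  refine ⟨fun p ↦ g (Ψ (x₀ + R (p - f x₀))), ?_, ?_⟩
  · have hsection : ContDiffAt ℝ n (fun p ↦ x₀ + R (p - f x₀)) (f x₀) := by fun_prop
    exact ContDiffAt.comp (g := g ∘ Ψ) (f x₀) (by simpa using hgΨ) hsection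
  · rw [EventuallyEq, ← hmap, eventually_map]
    filter_upwards [hfΨ, eventually_eq_rightInverse_of_ker_le_ker_fderiv hR
      (eventually_differentiableAt_of_contDiffAt hn hgΨ) hkerΨ] with z hz hgz
    simpa [hz] using hgz

end FunctionalDependence

section ConstantRank

theorem ker_comp_eq_ker_of_surjective {K V W Z : Type*} [DivisionRing K] [AddCommGroup V]
    [Module K V] [FiniteDimensional K V] [AddCommGroup W] [Module K W] [AddCommGroup Z]
    [Module K Z] {A : V →ₗ[K] W} {P : W →ₗ[K] Z} (hsurj : Function.Surjective (P ∘ₗ A))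
    (hrank : finrank K A.range = finrank K Z) : (P ∘ₗ A).ker = A.ker := by
  have hrange : finrank K (P ∘ₗ A).range = finrank K Z := by
    rw [LinearMap.range_eq_top.2 hsurj, finrank_top]
  have hA := A.finrank_range_add_finrank_ker
  have hPA := (P ∘ₗ A).finrank_range_add_finrank_ker
  exact (Submodule.eq_of_le_of_finrank_eq (LinearMap.ker_le_ker_comp A P) (by omega)).symm

theorem eventually_surjective_of_continuousAt {X E F : Type*} [TopologicalSpace X]
    [NormedAddCommGroup E] [NormedSpace ℝ E] [NormedAddCommGroup F] [NormedSpace ℝ F]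
    [CompleteSpace F] {A : X → E →L[ℝ] F} {x₀ : X}
    (hA : ContinuousAt A x₀) {R : F →L[ℝ] E}
    (hR : (A x₀).comp R = ContinuousLinearMap.id ℝ F) :
    ∀ᶠ x in 𝓝 x₀, Function.Surjective (A x) := by
  have hcont : ContinuousAt (fun x ↦ (A x).comp R) x₀ := hA.clm_comp continuousAt_const
  have hunit : IsUnit ((A x₀).comp R) := hR ▸ isUnit_one
  filter_upwards [hcont.eventually (Units.isOpen.mem_nhds hunit)] with x hx
  exact Function.Surjective.of_comp (g := R) (ContinuousLinearMap.isUnit_iff_bijective.1 hx).2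

variable {E H : Type*} [NormedAddCommGroup E] [NormedSpace ℝ E] [FiniteDimensional ℝ E]
  [NormedAddCommGroup H] [NormedSpace ℝ H]

theorem exists_eventuallyEq_comp_of_finrank_range_fderiv_eq {n : WithTop ℕ∞} (hn : n ≠ 0)
    {g : E → H} {x₀ : E} (hg : ContDiffAt ℝ n g x₀)
    (hrank : ∀ᶠ x in 𝓝 x₀, finrank ℝ (fderiv ℝ g x).range = finrank ℝ (fderiv ℝ g x₀).range) :
    ∃ (P : H →L[ℝ] (fderiv ℝ g x₀).range) (φ : (fderiv ℝ g x₀).range → H),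
      ContDiffAt ℝ n φ (P (g x₀)) ∧ ∀ᶠ x in 𝓝 x₀, g x = φ (P (g x)) := by
  have := FiniteDimensional.complete ℝ E
  obtain ⟨P, hP⟩ := Submodule.ClosedComplemented.of_finiteDimensional (fderiv ℝ g x₀).range
  have hPg : ContDiffAt ℝ n (P ∘ g) x₀ := P.contDiff.contDiffAt.comp x₀ hg
  have hfderiv : ∀ᶠ x in 𝓝 x₀, fderiv ℝ (P ∘ g) x = P.comp (fderiv ℝ g x) :=
    (eventually_differentiableAt_of_contDiffAt hn hg).mono fun x hx ↦
      (P.hasFDerivAt.comp x hx.hasFDerivAt).fderiv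
  have hsurj : (fderiv ℝ (P ∘ g) x₀).range = ⊤ := by
    rw [hfderiv.self_of_nhds, LinearMap.range_eq_top]
    rintro ⟨_, v, rfl⟩
    exact ⟨v, hP ⟨_, v, rfl⟩⟩
  obtain ⟨R, hR⟩ := ContinuousLinearMap.exists_rightInverse_of_surjective _ hsurj
  have hcont : ContinuousAt (fderiv ℝ (P ∘ g)) x₀ :=
    (hPg.fderiv_right (m := 0) (by simpa [ENat.one_le_iff_ne_zero_withTop])).continuousAt
  have hker : ∀ᶠ x in 𝓝 x₀, (fderiv ℝ (P ∘ g) x).ker ≤ (fderiv ℝ g x).ker := by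
    filter_upwards [hrank, hfderiv, eventually_surjective_of_continuousAt hcont hR]
      with x hrankx hfderivx hsurjx
    rw [hfderivx] at hsurjx ⊢
    exact (ker_comp_eq_ker_of_surjective (A := (fderiv ℝ g x : E →ₗ[ℝ] H)) (P := P)
      hsurjx hrankx).le
  obtain ⟨φ, hφ, hgφ⟩ := exists_eventuallyEq_comp_of_ker_fderiv_le hn hPg hg hR hker
  exact ⟨P, φ, hφ, hgφ⟩

theorem eventually_range_fderiv_eq_of_eq {n : WithTop ℕ∞} (hn : n ≠ 0) {g : E → H} {x₀ : E}
    (hg : ContDiffAt ℝ n g x₀)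
    (hrank : ∀ᶠ x in 𝓝 x₀, finrank ℝ (fderiv ℝ g x).range = finrank ℝ (fderiv ℝ g x₀).range) :
    ∀ᶠ x in 𝓝 x₀, g x = g x₀ → (fderiv ℝ g x).range = (fderiv ℝ g x₀).range := by
  obtain ⟨P, φ, hφ, hgφ⟩ := exists_eventuallyEq_comp_of_finrank_range_fderiv_eq hn hg hrank
  have hrange : ∀ᶠ x in 𝓝 x₀, g x = g x₀ →
      (fderiv ℝ g x).range = (fderiv ℝ φ (P (g x₀))).range := by
    filter_upwards [hgφ.eventually_nhds, hrank, eventually_differentiableAt_of_contDiffAt hn hg]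
      with x hgφx hrankx hgx hx
    have hφx : HasFDerivAt φ (fderiv ℝ φ (P (g x₀))) (P (g x)) := by
      rw [hx]
      exact (hφ.differentiableAt hn).hasFDerivAt
    have hfactor : fderiv ℝ g x = (fderiv ℝ φ (P (g x₀))).comp (P.comp (fderiv ℝ g x)) :=
      ((hφx.comp x (P.hasFDerivAt.comp x hgx.hasFDerivAt)).congr_of_eventuallyEq hgφx).fderiv
    have hle : (fderiv ℝ g x).range ≤ (fderiv ℝ φ (P (g x₀))).range := by
      rw [hfactor]
      exact LinearMap.range_comp_le_range _ _
    exact Submodule.eq_of_le_of_finrank_le hle (hrankx ▸ LinearMap.finrank_range_le _)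
  filter_upwards [hrange] with x hx hgx
  exact (hx hgx).trans (hrange.self_of_nhds rfl).symm

end ConstantRank

section KernelCurves

variable {E H : Type*} [NormedAddCommGroup E] [NormedSpace ℝ E] [NormedAddCommGroup H]
  [NormedSpace ℝ H] {I : Set ℝ} {γ γ' : ℝ → E} {s t : ℝ}

theorem comp_eq_of_fderiv_apply_eq_zero (hI : IsOpen I) (hI' : IsPreconnected I) {g : E → H}
    (hg : ∀ s ∈ I, DifferentiableAt ℝ g (γ s)) (hγ : ∀ s ∈ I, HasDerivAt γ (γ' s) s)
    (hker : ∀ s ∈ I, fderiv ℝ g (γ s) (γ' s) = 0) (hs : s ∈ I) (ht : t ∈ I) :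
    g (γ s) = g (γ t) :=
  eq_of_hasDerivAt_zero (u := g ∘ γ) hI hI'
    (fun r hr ↦ hker r hr ▸ (hg r hr).hasFDerivAt.comp_hasDerivAt r (hγ r hr)) hs ht

theorem range_fderiv_comp_eq [FiniteDimensional ℝ E] (hI : IsOpen I) (hI' : IsPreconnected I)
    {g : E → H} (hg : ∀ s ∈ I, ContDiffAt ℝ 1 g (γ s))
    (hrank : ∀ s ∈ I, ∀ᶠ x in 𝓝 (γ s),
      finrank ℝ (fderiv ℝ g x).range = finrank ℝ (fderiv ℝ g (γ s)).range)
    (hγ : ∀ s ∈ I, HasDerivAt γ (γ' s) s) (hker : ∀ s ∈ I, fderiv ℝ g (γ s) (γ' s) = 0)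
    (hs : s ∈ I) (ht : t ∈ I) : (fderiv ℝ g (γ s)).range = (fderiv ℝ g (γ t)).range := by
  refine hI'.induction₂ (fun a b ↦ (fderiv ℝ g (γ a)).range = (fderiv ℝ g (γ b)).range)
    (fun a ha ↦ ?_) (fun _ _ _ _ _ _ ↦ Eq.trans) (fun _ _ _ _ ↦ Eq.symm) hs ht
  have hlocal := (hγ a ha).continuousAt.eventually
    (eventually_range_fderiv_eq_of_eq one_ne_zero (hg a ha) (hrank a ha))
  filter_upwards [nhdsWithin_le_nhds hlocal, self_mem_nhdsWithin] with b hb hbI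
  exact (hb (comp_eq_of_fderiv_apply_eq_zero hI hI'
    (fun r hr ↦ (hg r hr).differentiableAt one_ne_zero) hγ hker hbI ha)).symm

theorem ker_le_ker_of_range_le_range {B C : E →L[ℝ] E →L[ℝ] H} (hB : ∀ v w, B v w = B w v)
    (hC : ∀ v w, C v w = C w v) (hrange : C.range ≤ B.range) : B.ker ≤ C.ker := by
  intro v hv
  refine LinearMap.mem_ker.2 (ContinuousLinearMap.ext fun w ↦ ?_)
  obtain ⟨u, hu⟩ := hrange ⟨w, rfl⟩
  calc C v w = C w v := hC v w
    _ = B u v := (DFunLike.congr_fun hu v).symm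
    _ = B v u := hB u v
    _ = 0 := DFunLike.congr_fun (LinearMap.mem_ker.1 hv) u

/-- The Hessian of `G` at `x`, encoded as the derivative of `fderiv ℝ G`. Its kernel and range are
those of `v ↦ hessian G x v`, so `finrank ℝ (hessian G x).range` is the rank of the Hessian. -/
noncomputable abbrev hessian (G : E → H) (x : E) : E →L[ℝ] E →L[ℝ] H :=
  fderiv ℝ (fderiv ℝ G) x

theorem differentiableAt_fderiv_of_contDiffAt {G : E → H} {x : E} (hG : ContDiffAt ℝ 2 G x) :
    DifferentiableAt ℝ (fderiv ℝ G) x :=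
  (hG.fderiv_right (m := 1) (by norm_num)).differentiableAt one_ne_zero

theorem fderiv_fderiv_apply_const {G : E → H} {x : E} (hG : ContDiffAt ℝ 2 G x) (u v : E) :
    fderiv ℝ (fun y ↦ fderiv ℝ G y u) x v = hessian G x v u := by
  rw [fderiv_clm_apply (differentiableAt_fderiv_of_contDiffAt hG) (differentiableAt_const u)]
  simp

theorem hasFDerivAt_sub_fderiv_apply_self {G : E → H} {x : E} (hG : ContDiffAt ℝ 2 G x) :
    HasFDerivAt (fun y ↦ G y - fderiv ℝ G y y) (-(hessian G x).flip x) x := by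
  have hpairing :=
    (differentiableAt_fderiv_of_contDiffAt hG).hasFDerivAt.clm_apply (hasFDerivAt_id x)
  refine ((hG.differentiableAt two_ne_zero).hasFDerivAt.sub hpairing).congr_fderiv ?_
  ext v
  simp

theorem ker_hessian_comp_eq [FiniteDimensional ℝ E] (hI : IsOpen I) (hI' : IsPreconnected I)
    {G : E → H} (hG : ∀ s ∈ I, ContDiffAt ℝ 2 G (γ s))
    (hrank : ∀ s ∈ I, ∀ᶠ x in 𝓝 (γ s),
      finrank ℝ (hessian G x).range = finrank ℝ (hessian G (γ s)).range)
    (hγ : ∀ s ∈ I, HasDerivAt γ (γ' s) s) (hker : ∀ s ∈ I, hessian G (γ s) (γ' s) = 0)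
    (hs : s ∈ I) (ht : t ∈ I) : (hessian G (γ s)).ker = (hessian G (γ t)).ker := by
  have hsymm : ∀ r ∈ I, ∀ v w, hessian G (γ r) v w = hessian G (γ r) w v := fun r hr ↦
    (hG r hr).isSymmSndFDerivAt (by simp)
  have hrange : (hessian G (γ s)).range = (hessian G (γ t)).range :=
    range_fderiv_comp_eq hI hI' (fun r hr ↦ (hG r hr).fderiv_right (by norm_num))
      hrank hγ hker hs ht
  exact (ker_le_ker_of_range_le_range (hsymm s hs) (hsymm t ht) hrange.ge).antisymm
    (ker_le_ker_of_range_le_range (hsymm t ht) (hsymm s hs) hrange.le)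

theorem stmt5_general [FiniteDimensional ℝ E] {Ω : Set E} (hΩ : IsOpen Ω) {G : E → H}
    (hG : ContDiffOn ℝ 2 G Ω) {r : ℕ} (hrank : ∀ x ∈ Ω, finrank ℝ (hessian G x).range = r)
    (hI : IsOpen I) (hI' : IsPreconnected I) (hγΩ : ∀ s ∈ I, γ s ∈ Ω)
    (hγ : ∀ s ∈ I, HasDerivAt γ (γ' s) s) (hker : ∀ s ∈ I, hessian G (γ s) (γ' s) = 0) :
    ∀ s ∈ I, ∀ t ∈ I,
      fderiv ℝ G (γ s) = fderiv ℝ G (γ t) ∧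
      G (γ s) - fderiv ℝ G (γ s) (γ s) = G (γ t) - fderiv ℝ G (γ t) (γ t) ∧
      γ s - γ t ∈ (hessian G (γ t)).ker := by
  intro s hs t ht
  have hG₂ : ∀ s ∈ I, ContDiffAt ℝ 2 G (γ s) := fun s hs ↦
    hG.contDiffAt (hΩ.mem_nhds (hγΩ s hs))
  have hrank' : ∀ s ∈ I, ∀ᶠ x in 𝓝 (γ s),
      finrank ℝ (hessian G x).range = finrank ℝ (hessian G (γ s)).range := fun s hs ↦
    (hΩ.eventually_mem (hγΩ s hs)).mono fun x hx ↦ (hrank x hx).trans (hrank _ (hγΩ s hs)).symm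
  refine ⟨?_, ?_, ?_⟩
  · exact comp_eq_of_fderiv_apply_eq_zero hI hI'
      (fun s hs ↦ differentiableAt_fderiv_of_contDiffAt (hG₂ s hs)) hγ hker hs ht
  · have hderiv := fun s hs ↦ hasFDerivAt_sub_fderiv_apply_self (hG₂ s hs)
    exact comp_eq_of_fderiv_apply_eq_zero hI hI' (fun s hs ↦ (hderiv s hs).differentiableAt) hγ
      (fun s hs ↦ by simp [(hderiv s hs).fderiv, hker s hs]) hs ht
  · have hker_t : ∀ s ∈ I, hessian G (γ t) (γ' s) = 0 := fun s hs ↦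
      (ker_hessian_comp_eq hI hI' hG₂ hrank' hγ hker hs ht).le (hker s hs)
    exact LinearMap.sub_mem_ker_iff.2 (comp_eq_of_fderiv_apply_eq_zero hI hI'
      (fun _ _ ↦ (hessian G (γ t)).differentiableAt) hγ (by simpa using hker_t) hs ht)

end KernelCurves

section Plane

variable {G : ℝ × ℝ → ℝ} {x : ℝ × ℝ}

theorem fderiv_apply_eq_pd (v : ℝ × ℝ) : fderiv ℝ G x v = pd1 G x * v.1 + pd2 G x * v.2 := by
  have hv : v = v.1 • (1, 0) + v.2 • (0, 1) := by simp
  conv_lhs => rw [hv]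
  simp only [map_add, map_smul, smul_eq_mul, pd1, pd2, mul_comm]

theorem hessian_apply_eq_zero_iff (hG : ContDiffAt ℝ 2 G x) (v : ℝ × ℝ) :
    hessian G x v = 0 ↔
      pd11 G x * v.1 + pd12 G x * v.2 = 0 ∧ pd21 G x * v.1 + pd22 G x * v.2 = 0 := by
  have hfst : hessian G x v (1, 0) = pd11 G x * v.1 + pd12 G x * v.2 :=
    (fderiv_fderiv_apply_const hG (1, 0) v).symm.trans (fderiv_apply_eq_pd v)
  have hsnd : hessian G x v (0, 1) = pd21 G x * v.1 + pd22 G x * v.2 :=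
    (fderiv_fderiv_apply_const hG (0, 1) v).symm.trans (fderiv_apply_eq_pd v)
  rw [← hfst, ← hsnd]
  refine ⟨fun h ↦ by simp [h], fun ⟨h₁, h₂⟩ ↦ ?_⟩
  ext
  · simpa using h₁
  · simpa using h₂

theorem pd21_eq_pd12 (hG : ContDiffAt ℝ 2 G x) : pd21 G x = pd12 G x :=
  calc pd21 G x = hessian G x (1, 0) (0, 1) := fderiv_fderiv_apply_const hG (0, 1) (1, 0)
    _ = hessian G x (0, 1) (1, 0) := hG.isSymmSndFDerivAt (by simp) _ _
    _ = pd12 G x := (fderiv_fderiv_apply_const hG (1, 0) (0, 1)).symm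

theorem finrank_range_and_ker_hessian_eq_one (hG : ContDiffAt ℝ 2 G x)
    (hMA : pd11 G x * pd22 G x - pd12 G x ^ 2 = 0) (hnd : pd11 G x ≠ 0 ∨ pd22 G x ≠ 0) :
    finrank ℝ (hessian G x).range = 1 ∧ finrank ℝ (hessian G x).ker = 1 := by
  have hmem : ∀ v : ℝ × ℝ, v ∈ (hessian G x).ker ↔
      pd11 G x * v.1 + pd12 G x * v.2 = 0 ∧ pd12 G x * v.1 + pd22 G x * v.2 = 0 := fun v ↦
    pd21_eq_pd12 hG ▸ hessian_apply_eq_zero_iff hG v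
  have hker : (hessian G x).ker ≠ ⊥ := by
    refine (Submodule.ne_bot_iff _).2 ?_
    rcases hnd with h₁₁ | h₂₂
    · exact ⟨(-pd12 G x, pd11 G x), (hmem _).2 ⟨by ring, by linear_combination hMA⟩, by simp [h₁₁]⟩
    · exact ⟨(pd22 G x, -pd12 G x), (hmem _).2 ⟨by linear_combination hMA, by ring⟩, by simp [h₂₂]⟩
  have hrange : (hessian G x).range ≠ ⊥ := fun hbot ↦ by
    have hzero : ∀ v : ℝ × ℝ, v ∈ (hessian G x).ker := by
      simp [LinearMap.ker_eq_top.2 (LinearMap.range_eq_bot.1 hbot)]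
    have h₁ := (hmem (1, 0)).1 (hzero _)
    have h₂ := (hmem (0, 1)).1 (hzero _)
    simp_all
  have hker_pos := Nat.pos_of_ne_zero (mt Submodule.finrank_eq_zero.1 hker)
  have hrange_pos := Nat.pos_of_ne_zero (mt Submodule.finrank_eq_zero.1 hrange)
  have hsum := (hessian G x : ℝ × ℝ →ₗ[ℝ] ℝ × ℝ →L[ℝ] ℝ).finrank_range_add_finrank_ker
  have hdim : finrank ℝ (ℝ × ℝ) = 2 := by simp
  omega

end Plane

theorem stmt5 (Ω : Set (ℝ × ℝ)) (hΩ : IsOpen Ω) (G : ℝ × ℝ → ℝ)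
    (hG : ContDiffOn ℝ 2 G Ω)
    (hMA : ∀ x ∈ Ω, pd11 G x * pd22 G x - (pd12 G x) ^ 2 = 0)
    (hnd : ∀ x ∈ Ω, pd11 G x ≠ 0 ∨ pd22 G x ≠ 0)
    (α β : ℝ) (γ γ' : ℝ → ℝ × ℝ)
    (hγΩ : ∀ s ∈ Ioo α β, γ s ∈ Ω)
    (hγ' : ∀ s ∈ Ioo α β, HasDerivAt γ (γ' s) s)
    (hγ'cont : ContinuousOn γ' (Ioo α β))
    (hγ'ne : ∀ s ∈ Ioo α β, γ' s ≠ 0)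
    (hker : ∀ s ∈ Ioo α β,
      pd11 G (γ s) * (γ' s).1 + pd12 G (γ s) * (γ' s).2 = 0 ∧
      pd21 G (γ s) * (γ' s).1 + pd22 G (γ s) * (γ' s).2 = 0) :
    (∀ s ∈ Ioo α β, ∀ t ∈ Ioo α β,
      pd1 G (γ s) = pd1 G (γ t) ∧
      pd2 G (γ s) = pd2 G (γ t) ∧
      G (γ s) - pd1 G (γ s) * (γ s).1 - pd2 G (γ s) * (γ s).2 =
        G (γ t) - pd1 G (γ t) * (γ t).1 - pd2 G (γ t) * (γ t).2) ∧
    (∃ p v : ℝ × ℝ, ∀ s ∈ Ioo α β, ∃ c : ℝ, γ s = p + c • v) := by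
  have hG₂ : ∀ x ∈ Ω, ContDiffAt ℝ 2 G x := fun x hx ↦ hG.contDiffAt (hΩ.mem_nhds hx)
  have hone := fun x hx ↦ finrank_range_and_ker_hessian_eq_one (hG₂ x hx) (hMA x hx) (hnd x hx)
  have hgeneral := stmt5_general hΩ hG (fun x hx ↦ (hone x hx).1) isOpen_Ioo isPreconnected_Ioo
    hγΩ hγ' (fun s hs ↦ (hessian_apply_eq_zero_iff (hG₂ _ (hγΩ s hs)) _).2 (hker s hs))
  refine ⟨fun s hs t ht ↦ ?_, ?_⟩
  · obtain ⟨hgrad, hintercept, -⟩ := hgeneral s hs t ht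
    refine ⟨DFunLike.congr_fun hgrad (1, 0), DFunLike.congr_fun hgrad (0, 1), ?_⟩
    simpa only [fderiv_apply_eq_pd, ← sub_sub] using hintercept
  · rcases (Ioo α β).eq_empty_or_nonempty with hempty | ⟨t, ht⟩
    · simp [hempty]
    obtain ⟨v, -, hv⟩ := finrank_eq_one_iff'.1 (hone _ (hγΩ t ht)).2
    refine ⟨γ t, v, fun s hs ↦ ?_⟩
    obtain ⟨c, hc⟩ := hv ⟨γ s - γ t, (hgeneral s hs t ht).2.2⟩
    exact ⟨c, by rw [show c • (v : ℝ × ℝ) = γ s - γ t from congrArg Subtype.val hc, add_sub_cancel]⟩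
end

section
/- Let ε > 0 and let φ be a measurable function on [l,r] with φ and φ² integrable. Define the curve γ(s) = (⟨φ⟩_{[l,s]}, ⟨φ²⟩_{[l,s]}) for s ∈ (l,r]. Assume γ(s) ∈ Ω_ε for all s ∈ (l,r], that there is a convex function g such that γ₂(s) = g(γ₁(s)) for all s ∈ (l,r], and that at some b ∈ (l,r] the function g is differentiable at γ₁(b) and the tangent line to the graph of g at γ(b) lies below the upper boundary of Ω_ε, i.e. γ₂(b) + g'(γ₁(b))·(t − γ₁(b)) ≤ t² + ε² for all t ∈ ℝ. Then for every a with l ≤ a < b, the Bellman point x^{[a,b]} = (⟨φ⟩_{[a,b]}, ⟨φ²⟩_{[a,b]}) belongs to Ω_ε. -/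
open MeasureTheory Set Real

/-- The parabolic strip `Ω_ε`. -/
def parabStrip (ε : ℝ) : Set (ℝ × ℝ) := {x | x.1 ^ 2 ≤ x.2 ∧ x.2 ≤ x.1 ^ 2 + ε ^ 2}

/-!
The point `x^{[l,b]}` is a convex combination of `x^{[l,a]}` and `x^{[a,b]}`. By convexity of `g`,
the point `x^{[l,a]}` lies on or above the tangent line at `x^{[l,b]}`, so `x^{[a,b]}` lies on or
below that line, and hence below the upper boundary of the strip. It lies above the lower boundary
by Jensen's inequality.
-/

theorem add_mul_sub_le_of_convexOn_of_hasDerivAt {S : Set ℝ} {g : ℝ → ℝ} {g' x y : ℝ}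
    (hg : ConvexOn ℝ S g) (hx : x ∈ S) (hy : y ∈ S) (hg' : HasDerivAt g g' x) :
    g x + g' * (y - x) ≤ g y := by
  rcases lt_trichotomy y x with hyx | rfl | hxy
  · have hslope := hg.slope_le_of_hasDerivAt hy hx hyx hg'
    rw [slope_def_field, div_le_iff₀ (sub_pos.2 hyx)] at hslope
    linarith
  · simp
  · have hslope := hg.le_slope_of_hasDerivAt hx hy hxy hg'
    rw [slope_def_field, le_div_iff₀ (sub_pos.2 hxy)] at hslope
    linarith

section intAvg

variable {f φ : ℝ → ℝ} {a b l : ℝ}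

theorem intAvg_eq_average (f : ℝ → ℝ) (a b : ℝ) : intAvg f a b = ⨍ t in a..b, f t :=
  (interval_average_eq_div f a b).symm

theorem sub_mul_intAvg (f : ℝ → ℝ) (a b : ℝ) : (b - a) * intAvg f a b = ∫ t in a..b, f t := by
  rcases eq_or_ne a b with rfl | hab
  · simp
  · exact mul_div_cancel₀ _ (sub_ne_zero.2 hab.symm)

theorem intAvg_sub_const_mul (k : ℝ) (hf : IntervalIntegrable f volume a b)
    (hφ : IntervalIntegrable φ volume a b) :
    intAvg (fun t => f t - k * φ t) a b = intAvg f a b - k * intAvg φ a b := by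
  simp only [intAvg, intervalIntegral.integral_sub hf (hφ.const_mul k),
    intervalIntegral.integral_const_mul, sub_div, mul_div_assoc]

theorem sub_mul_intAvg_add_adjacent (hla : IntervalIntegrable f volume l a)
    (hab : IntervalIntegrable f volume a b) :
    (a - l) * intAvg f l a + (b - a) * intAvg f a b = (b - l) * intAvg f l b := by
  simpa only [sub_mul_intAvg] using intervalIntegral.integral_add_adjacent_intervals hla hab

theorem intAvg_right_le_of_le_intAvg_left (hla : l ≤ a) (hab : a < b)
    (hfla : IntervalIntegrable f volume l a) (hfab : IntervalIntegrable f volume a b)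
    (hle : intAvg f l b ≤ intAvg f l a) : intAvg f a b ≤ intAvg f l b := by
  refine le_of_mul_le_mul_left ?_ (sub_pos.2 hab)
  calc (b - a) * intAvg f a b
      = (b - l) * intAvg f l b - (a - l) * intAvg f l a :=
        eq_sub_of_add_eq' (sub_mul_intAvg_add_adjacent hfla hfab)
    _ ≤ (b - l) * intAvg f l b - (a - l) * intAvg f l b :=
        sub_le_sub_left (mul_le_mul_of_nonneg_left hle (sub_nonneg.2 hla)) _
    _ = (b - a) * intAvg f l b := by ring

theorem map_intAvg_le_of_convexOn {g : ℝ → ℝ} (hg : ConvexOn ℝ univ g) (hab : a ≠ b)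
    (hφ : IntervalIntegrable φ volume a b)
    (hgφ : IntervalIntegrable (fun t => g (φ t)) volume a b) :
    g (intAvg φ a b) ≤ intAvg (fun t => g (φ t)) a b := by
  rw [intAvg_eq_average, intAvg_eq_average]
  have hvol : volume (uIoc a b) ≠ 0 := by simpa [volume_uIoc, sub_eq_zero] using hab.symm
  exact hg.map_set_average_le (hg.continuousOn isOpen_univ) isClosed_univ hvol
    (by simp [volume_uIoc]) (by simp) hφ.def' hgφ.def'

theorem intAvg_le_of_supporting_line {k : ℝ} (hla : l ≤ a) (hab : a < b)
    (hφ : IntervalIntegrable φ volume l b) (hf : IntervalIntegrable f volume l b)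
    (hsupp : intAvg f l b + k * (intAvg φ l a - intAvg φ l b) ≤ intAvg f l a) :
    intAvg f a b ≤ intAvg f l b + k * (intAvg φ a b - intAvg φ l b) := by
  have ha : a ∈ uIcc l b := Icc_subset_uIcc ⟨hla, hab.le⟩
  have hleft : uIcc l a ⊆ uIcc l b := uIcc_subset_uIcc_left ha
  have hright : uIcc a b ⊆ uIcc l b := uIcc_subset_uIcc_right ha
  -- Up to a constant, the average of `f - k φ` is the height above a line of slope `k`.
  have hψ := hf.sub (hφ.const_mul k)
  have hle := intAvg_right_le_of_le_intAvg_left hla hab (hψ.mono_set hleft) (hψ.mono_set hright)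
  rw [intAvg_sub_const_mul k hf hφ,
    intAvg_sub_const_mul k (hf.mono_set hleft) (hφ.mono_set hleft),
    intAvg_sub_const_mul k (hf.mono_set hright) (hφ.mono_set hright)] at hle
  linarith [hle (by linarith)]

end intAvg

theorem stmt6_general {ε l b k : ℝ} {φ : ℝ → ℝ} (hφ : IntegrableOn φ (Ioo l b))
    (hφ2 : IntegrableOn (fun t => φ t ^ 2) (Ioo l b))
    (hsupp : ∀ s ∈ Ioo l b, intAvg (fun t => φ t ^ 2) l b + k * (intAvg φ l s - intAvg φ l b) ≤
      intAvg (fun t => φ t ^ 2) l s)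
    (hbelow : ∀ t : ℝ,
      intAvg (fun t => φ t ^ 2) l b + k * (t - intAvg φ l b) ≤ t ^ 2 + ε ^ 2)
    {a : ℝ} (hla : l ≤ a) (hab : a < b) :
    (intAvg φ a b, intAvg (fun t => φ t ^ 2) a b) ∈ parabStrip ε := by
  rw [← intervalIntegrable_iff_integrableOn_Ioo_of_le (hla.trans hab.le)] at hφ hφ2
  have hsub : uIcc a b ⊆ uIcc l b := uIcc_subset_uIcc_right (Icc_subset_uIcc ⟨hla, hab.le⟩)
  have hline : intAvg (fun t => φ t ^ 2) a b ≤
      intAvg (fun t => φ t ^ 2) l b + k * (intAvg φ a b - intAvg φ l b) := by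
    rcases hla.eq_or_lt with rfl | hla
    · simp
    · exact intAvg_le_of_supporting_line hla.le hab hφ hφ2 (hsupp a ⟨hla, hab⟩)
  exact ⟨map_intAvg_le_of_convexOn even_two.convexOn_pow hab.ne (hφ.mono_set hsub)
    (hφ2.mono_set hsub), hline.trans (hbelow _)⟩

theorem stmt6 (ε : ℝ) (hε : 0 < ε) (l r : ℝ) (hlr : l < r) (φ : ℝ → ℝ)
    (hmeas : Measurable φ)
    (h1 : IntegrableOn φ (Ioo l r))
    (h2 : IntegrableOn (fun t => (φ t) ^ 2) (Ioo l r))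
    (hstrip : ∀ s ∈ Ioc l r,
      (intAvg φ l s, intAvg (fun t => (φ t) ^ 2) l s) ∈ parabStrip ε)
    (g : ℝ → ℝ) (hconv : ConvexOn ℝ univ g)
    (hgraph : ∀ s ∈ Ioc l r, intAvg (fun t => (φ t) ^ 2) l s = g (intAvg φ l s))
    (b : ℝ) (hb : b ∈ Ioc l r) (g' : ℝ)
    (hdiff : HasDerivAt g g' (intAvg φ l b))
    (htangent : ∀ t : ℝ,
      intAvg (fun t => (φ t) ^ 2) l b + g' * (t - intAvg φ l b) ≤ t ^ 2 + ε ^ 2) :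
    ∀ a : ℝ, l ≤ a → a < b →
      (intAvg φ a b, intAvg (fun t => (φ t) ^ 2) a b) ∈ parabStrip ε := by
  have hsub : Ioo l b ⊆ Ioo l r := Ioo_subset_Ioo_right hb.2
  refine fun a => stmt6_general (h1.mono_set hsub) (h2.mono_set hsub) (fun s hs => ?_) htangent
  rw [hgraph b hb, hgraph s ⟨hs.1, hs.2.le.trans hb.2⟩]
  exact add_mul_sub_le_of_convexOn_of_hasDerivAt hconv (mem_univ _) (mem_univ _) hdiff
end

section
/- Let ε > 0, let −∞ ≤ u₁ < u₂ ≤ +∞, let f : ℝ → ℝ be twice continuously differentiable, and let m : (u₁,u₂) → ℝ be twice differentiable and satisfy the ODE ε·m'(u) + m(u) = f'(u) on (u₁,u₂). Define Ω_R(u₁,u₂) = {x ∈ Ω_ε : u₁ < u_R(x) < u₂} and B^R(x) = m(u_R(x))·(x₁ − u_R(x)) + f(u_R(x)) on Ω_R(u₁,u₂). Then: (i) B^R(u, u²) = f(u) for all u ∈ (u₁,u₂); (ii) the gradient of B^R is constant along each tangent segment {x ∈ Ω_R(u₁,u₂) : u_R(x) = u}, so B^R solves the homogeneous Monge–Ampère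 equation B_{x₁x₁}B_{x₂x₂} − B_{x₁x₂}² = 0 on the interior of Ω_R(u₁,u₂); (iii) B^R is locally concave on Ω_R(u₁,u₂) if and only if m''(u) ≤ 0 for every u ∈ (u₁,u₂). -/
open Set Real

/-- The parameter of the right tangent through `x`. -/
noncomputable def uRpt (ε : ℝ) (x : ℝ × ℝ) : ℝ :=
  x.1 + ε - Real.sqrt (ε ^ 2 - (x.2 - x.1 ^ 2))

/-- Local concavity on a subset of the plane. -/
def LocallyConcaveOn (Ω : Set (ℝ × ℝ)) (G : ℝ × ℝ → ℝ) : Prop :=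
  ∀ x y : ℝ × ℝ, x ∈ Ω → y ∈ Ω → segment ℝ x y ⊆ Ω →
    ∀ α β : ℝ, 0 ≤ α → 0 ≤ β → α + β = 1 →
      α * G x + β * G y ≤ G (α • x + β • y)

/-- The domain `Ω_R(u₁,u₂)` foliated by right tangents with parameters in `(u₁,u₂)`. -/
def OmegaR (ε : ℝ) (u₁ u₂ : EReal) : Set (ℝ × ℝ) :=
  {x | x ∈ parabStrip ε ∧ u₁ < (uRpt ε x : EReal) ∧ (uRpt ε x : EReal) < u₂}

/-- The Bellman candidate `B^R` built from the coefficient `m`. -/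
noncomputable def BRcand (ε : ℝ) (f m : ℝ → ℝ) (x : ℝ × ℝ) : ℝ :=
  m (uRpt ε x) * (x.1 - uRpt ε x) + f (uRpt ε x)

/-!
`B^R` is the envelope of the planes `T_v` that contain its graph over the right tangent with
parameter `v`. Let `N_v` be the linear form vanishing along that tangent. The ODE for `m` says
exactly that `∂T_v(x)/∂v = (m'' v / 2) * N_v (x - (v, v²))`, without a term in `m'`. Hence `B^R` has
the gradient of `T_v` along the whole tangent, and its Hessian is a multiple of `N_v ⊗ N_v` by a
factor with the sign of `m''`. This gives the Monge–Ampère equation, and it shows that `m'' ≤ 0` is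
necessary for concavity.

Conversely, let `m'' ≤ 0`. As a function of `v`, `N_v (x - (v, v²))` changes sign at `u_R(x)`, and
next at the parameter of the tangent touching the upper parabola to the right of `x`. So
`T_v(x) ≥ B^R(x)` up to that parameter, and `u_R(z)` does not exceed it when `[x, z]` lies in the
strip: otherwise `[x, z]` would leave the strip near the tangency point of the right tangent
through `z`. Thus the plane of `z` supports `B^R` along every segment through `z`.
-/

open Filter Topology

section Calculus

theorem le_of_hasDerivAt_mul_sub {φ k : ℝ → ℝ} {a b : ℝ}
    (hφ : ∀ w ∈ uIcc a b, HasDerivAt φ (k w * (w - a)) w) (hk : ∀ w ∈ uIcc a b, 0 ≤ k w) :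
    φ a ≤ φ b := by
  have hmem : ∀ t ∈ Icc (0 : ℝ) 1, a + t * (b - a) ∈ uIcc a b := fun t ht ↦ by
    rw [← segment_eq_uIcc, segment_eq_image']
    exact ⟨t, ht, rfl⟩
  have hder : ∀ t ∈ Icc (0 : ℝ) 1, HasDerivAt (fun t ↦ φ (a + t * (b - a)))
      (k (a + t * (b - a)) * (a + t * (b - a) - a) * (b - a)) t := fun t ht ↦
    (hφ _ (hmem t ht)).comp t (by
      simpa using ((hasDerivAt_id t).mul_const (b - a)).const_add a)
  obtain ⟨t, ht, hslope⟩ := exists_hasDerivAt_eq_slope _ _ zero_lt_one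
    (fun t ht ↦ (hder t ht).continuousAt.continuousWithinAt)
    (fun t ht ↦ hder t (Ioo_subset_Icc_self ht))
  have hnonneg : 0 ≤ k (a + t * (b - a)) * (t * (b - a) ^ 2) :=
    mul_nonneg (hk _ (hmem t (Ioo_subset_Icc_self ht))) (mul_nonneg ht.1.le (sq_nonneg _))
  simp only [one_mul, zero_mul, add_zero, sub_zero, div_one, add_sub_cancel] at hslope
  linarith

variable {E : Type*} [NormedAddCommGroup E] [NormedSpace ℝ E]

theorem fderiv_fderiv_apply_nonpos_of_concaveOn {s : Set E} {G : E → ℝ} {x v : E}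
    (hG : ConcaveOn ℝ s G) (hs : s ∈ 𝓝 x) (hdiff : ∀ᶠ y in 𝓝 x, DifferentiableAt ℝ G y)
    (hdiff₂ : DifferentiableAt ℝ (fun y ↦ fderiv ℝ G y v) x) :
    fderiv ℝ (fun y ↦ fderiv ℝ G y v) x v ≤ 0 := by
  obtain ⟨r, hr, hball⟩ := Metric.mem_nhds_iff.1 (inter_mem hs hdiff)
  let line : ℝ →ᵃ[ℝ] E := AffineMap.lineMap x (x + v)
  have hline : ∀ t, HasDerivAt line v t := fun t ↦ by
    simpa [line] using AffineMap.hasDerivAt_lineMap (a := x) (b := x + v) (x := t)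
  have hline0 : line 0 = x := AffineMap.lineMap_apply_zero _ _
  have hφ : ∀ t ∈ line ⁻¹' Metric.ball x r,
      HasDerivAt (G ∘ line) (fderiv ℝ G (line t) v) t := fun t ht ↦
    (hball ht).2.hasFDerivAt.comp_hasDerivAt t (hline t)
  have hconc : ConcaveOn ℝ (line ⁻¹' Metric.ball x r) (G ∘ line) :=
    (hG.subset (fun y hy ↦ (hball hy).1) (convex_ball x r)).comp_affineMap line
  have hanti : AntitoneOn (fun t ↦ fderiv ℝ G (line t) v) (line ⁻¹' Metric.ball x r) :=
    (hconc.antitoneOn_deriv fun t ht ↦ (hφ t ht).differentiableAt).congr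
      fun t ht ↦ (hφ t ht).deriv
  have hcont : Continuous line := continuous_iff_continuousAt.2 fun t ↦ (hline t).continuousAt
  have hmem : (0 : ℝ) ∈ line ⁻¹' Metric.ball x r := by simpa [hline0] using hr
  have hφ₂ : HasDerivAt (fun t ↦ fderiv ℝ G (line t) v)
      (fderiv ℝ (fun y ↦ fderiv ℝ G y v) x v) 0 :=
    hdiff₂.hasFDerivAt.comp_hasDerivAt_of_eq 0 (hline 0) hline0.symm
  rw [← hφ₂.deriv, ← derivWithin_of_isOpen (Metric.isOpen_ball.preimage hcont) hmem]
  exact hanti.derivWithin_nonpos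

end Calculus

section LocalConcavity

variable {Ω : Set (ℝ × ℝ)} {G : ℝ × ℝ → ℝ}

theorem LocallyConcaveOn.concaveOn {s : Set (ℝ × ℝ)} (hG : LocallyConcaveOn Ω G)
    (hs : Convex ℝ s) (hsΩ : s ⊆ Ω) : ConcaveOn ℝ s G :=
  ⟨hs, fun _ hx _ hy _ _ hα hβ hαβ ↦ hG _ _ (hsΩ hx) (hsΩ hy)
    ((hs.segment_subset hx hy).trans hsΩ) _ _ hα hβ hαβ⟩

theorem LocallyConcaveOn.pd22_nonpos {x : ℝ × ℝ} (hG : LocallyConcaveOn Ω G)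
    (hx : x ∈ interior Ω) (hdiff : ∀ᶠ y in 𝓝 x, DifferentiableAt ℝ G y)
    (hdiff₂ : DifferentiableAt ℝ (pd2 G) x) : pd22 G x ≤ 0 := by
  obtain ⟨r, hr, hball⟩ := Metric.mem_nhds_iff.1 (mem_interior_iff_mem_nhds.1 hx)
  exact fderiv_fderiv_apply_nonpos_of_concaveOn (hG.concaveOn (convex_ball x r) hball)
    (Metric.ball_mem_nhds x hr) hdiff hdiff₂

theorem locallyConcaveOn_of_supergradient
    (h : ∀ z ∈ Ω, ∃ g : ℝ × ℝ →L[ℝ] ℝ, ∀ x, segment ℝ x z ⊆ Ω → G x ≤ G z + g (x - z)) :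
    LocallyConcaveOn Ω G := by
  intro x y _ _ hseg α β hα hβ hαβ
  set z := α • x + β • y with hz
  have hz_mem : z ∈ segment ℝ x y := ⟨α, β, hα, hβ, hαβ, rfl⟩
  have hsub : ∀ p ∈ segment ℝ x y, segment ℝ p z ⊆ Ω := fun p hp ↦
    ((convex_segment x y).segment_subset hp hz_mem).trans hseg
  obtain ⟨g, hg⟩ := h z (hseg hz_mem)
  have hbalance : α * g (x - z) + β * g (y - z) = 0 := by
    have hgz : g z = α * g x + β * g y := by simp [hz]
    rw [map_sub, map_sub]
    linear_combination (-g z) * hαβ - hgz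
  calc α * G x + β * G y
      ≤ α * (G z + g (x - z)) + β * (G z + g (y - z)) := by
        gcongr
        · exact hg x (hsub x (left_mem_segment ℝ x y))
        · exact hg y (hsub y (right_mem_segment ℝ x y))
    _ = G z := by linear_combination G z * hαβ + hbalance

end LocalConcavity

section RightTangents

/-- The horizontal distance from `x` to the points at which the two tangents through `x` touch the
upper parabola, so that `u_R(x) = x₁ + ε - tangencyDist ε x`. -/
noncomputable def tangencyDist (ε : ℝ) (x : ℝ × ℝ) : ℝ := √(ε ^ 2 - (x.2 - x.1 ^ 2))

/-- The linear form `w ↦ w₂ - 2 (v - ε) w₁` vanishing along the right tangent with parameter `v`,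
which touches the upper parabola above `v - ε`. -/
noncomputable def rightTangentForm (ε v : ℝ) : ℝ × ℝ →L[ℝ] ℝ :=
  ContinuousLinearMap.snd ℝ ℝ ℝ - (2 * (v - ε)) • ContinuousLinearMap.fst ℝ ℝ ℝ

/-- The part of the strip `Ω_ε` covered by the right tangents with parameters in `J`; the domain
`Ω_R(u₁,u₂)` is the case of an interval `J`. -/
def rightTangentDomain (ε : ℝ) (J : Set ℝ) : Set (ℝ × ℝ) := parabStrip ε ∩ uRpt ε ⁻¹' J

variable {ε : ℝ} {J : Set ℝ} {x z : ℝ × ℝ}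

theorem uRpt_eq_sub_tangencyDist (ε : ℝ) (x : ℝ × ℝ) : uRpt ε x = x.1 + ε - tangencyDist ε x :=
  rfl

theorem tangencyDist_nonneg (ε : ℝ) (x : ℝ × ℝ) : 0 ≤ tangencyDist ε x := sqrt_nonneg _

theorem sq_tangencyDist (hx : x.2 ≤ x.1 ^ 2 + ε ^ 2) :
    tangencyDist ε x ^ 2 = ε ^ 2 - (x.2 - x.1 ^ 2) :=
  sq_sqrt (by linarith)

theorem tangencyDist_pos (hx : x.2 < x.1 ^ 2 + ε ^ 2) : 0 < tangencyDist ε x :=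
  sqrt_pos.2 (by linarith)

theorem continuous_uRpt (ε : ℝ) : Continuous (uRpt ε) := by
  unfold uRpt
  fun_prop

theorem rightTangentForm_apply (ε v : ℝ) (w : ℝ × ℝ) :
    rightTangentForm ε v w = w.2 - 2 * (v - ε) * w.1 := by
  simp [rightTangentForm]

theorem rightTangentForm_sub_eq_sq_sub_sq (hx : x.2 ≤ x.1 ^ 2 + ε ^ 2) (v : ℝ) :
    rightTangentForm ε v (x - (v, v ^ 2)) = (v - ε - x.1) ^ 2 - tangencyDist ε x ^ 2 := by
  rw [rightTangentForm_apply, sq_tangencyDist hx, Prod.fst_sub, Prod.snd_sub]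
  ring

theorem rightTangentForm_uRpt_sub (hx : x.2 ≤ x.1 ^ 2 + ε ^ 2) :
    rightTangentForm ε (uRpt ε x) (x - (uRpt ε x, uRpt ε x ^ 2)) = 0 := by
  rw [rightTangentForm_sub_eq_sq_sub_sq hx, uRpt_eq_sub_tangencyDist]
  ring

theorem uRpt_parabola (hε : 0 ≤ ε) (u : ℝ) : uRpt ε (u, u ^ 2) = u := by
  simp [uRpt, sqrt_sq hε]

theorem hasFDerivAt_uRpt (hx : x.2 < x.1 ^ 2 + ε ^ 2) :
    HasFDerivAt (uRpt ε) ((2 * tangencyDist ε x)⁻¹ • rightTangentForm ε (uRpt ε x)) x := by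
  have hdist := tangencyDist_pos hx
  have hfst : HasFDerivAt Prod.fst (ContinuousLinearMap.fst ℝ ℝ ℝ) x := hasFDerivAt_fst
  have hsnd : HasFDerivAt Prod.snd (ContinuousLinearMap.snd ℝ ℝ ℝ) x := hasFDerivAt_snd
  have hsqrt := ((hsnd.sub (hfst.pow 2)).const_sub (ε ^ 2)).sqrt (sqrt_pos.1 hdist).ne'
  refine ((hfst.add_const ε).sub hsqrt).congr_fderiv ?_
  change ContinuousLinearMap.fst ℝ ℝ ℝ - (1 / (2 * tangencyDist ε x)) • _ = _
  rw [uRpt_eq_sub_tangencyDist]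
  refine ContinuousLinearMap.ext fun w ↦ ?_
  simp only [sub_apply, smul_apply, neg_apply, smul_eq_mul, nsmul_eq_mul, rightTangentForm_apply,
    ContinuousLinearMap.coe_fst', ContinuousLinearMap.coe_snd', Nat.add_one_sub_one, pow_one,
    Nat.cast_ofNat]
  field_simp
  ring

theorem exists_mem_Icc_sq_sub_lt_mul {a b q : ℝ} (ha : 0 < a) (hb : 0 ≤ b) (hq : 0 < q)
    (hqa : q ≤ a ^ 2) : ∃ r ∈ Icc (0 : ℝ) 1, (r * (a + b) - b) ^ 2 < r * q := by
  have hab : 0 < a + b := by linarith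
  -- At `r = b / (a + b)` the left side vanishes, but so may the right side, hence the shift `η`.
  set η := q / (2 * (a + b)) with hη
  have hηq : η * (2 * (a + b)) = q := by rw [hη]; field_simp
  have hη_pos : 0 < η := by positivity
  have hη_le : η ≤ a := by
    rw [hη, div_le_iff₀ (by positivity)]
    nlinarith
  refine ⟨(b + η) / (a + b), ⟨by positivity, (div_le_one hab).2 (by linarith)⟩, ?_⟩
  calc ((b + η) / (a + b) * (a + b) - b) ^ 2 = η ^ 2 := by field_simp; ring
    _ < 2 * (b + η) * η := by nlinarith
    _ = (b + η) / (a + b) * q := by rw [← hηq]; field_simp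

theorem uRpt_sub_le_add_tangencyDist (hseg : segment ℝ x z ⊆ parabStrip ε) :
    uRpt ε z - ε ≤ x.1 + tangencyDist ε x := by
  by_contra! hlt
  have hdistx := tangencyDist_nonneg ε x
  have hx := sq_tangencyDist (hseg (left_mem_segment ℝ x z)).2
  have hz := sq_tangencyDist (hseg (right_mem_segment ℝ x z)).2
  have hz₁ : z.1 = uRpt ε z - ε + tangencyDist ε z := by rw [uRpt_eq_sub_tangencyDist]; ring
  set p := uRpt ε z - ε
  obtain ⟨r, hr, hlt_r⟩ := exists_mem_Icc_sq_sub_lt_mul (a := p - x.1) (b := tangencyDist ε z)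
    (q := (p - x.1) ^ 2 - tangencyDist ε x ^ 2) (by linarith) (tangencyDist_nonneg ε z)
    (by nlinarith) (by nlinarith)
  have hupper := (hseg ⟨r, 1 - r, hr.1, by linarith [hr.2], by ring, rfl⟩).2
  simp only [Prod.fst_add, Prod.snd_add, Prod.smul_fst, Prod.smul_snd, smul_eq_mul] at hupper
  have hexcess : r * ((p - x.1) ^ 2 - tangencyDist ε x ^ 2) -
      (r * (p - x.1 + tangencyDist ε z) - tangencyDist ε z) ^ 2 =
      r * x.2 + (1 - r) * z.2 - ((r * x.1 + (1 - r) * z.1) ^ 2 + ε ^ 2) := by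
    rw [hz₁] at hz ⊢
    linear_combination (-r) * hx - (1 - r) * hz
  linarith

theorem uIcc_uRpt_subset (hseg : segment ℝ x z ⊆ rightTangentDomain ε J) :
    uIcc (uRpt ε x) (uRpt ε z) ⊆ J :=
  have himage : (uRpt ε '' segment ℝ x z).OrdConnected :=
    ((convex_segment x z).isPreconnected.image _ (continuous_uRpt ε).continuousOn).ordConnected
  (himage.uIcc_subset (mem_image_of_mem _ (left_mem_segment ℝ x z))
    (mem_image_of_mem _ (right_mem_segment ℝ x z))).trans
      (image_subset_iff.2 fun _ hp ↦ (hseg hp).2)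

theorem lt_upper_of_mem_interior (hx : x ∈ interior (parabStrip ε)) : x.2 < x.1 ^ 2 + ε ^ 2 := by
  have hvert : Tendsto (fun t : ℝ ↦ (x.1, t)) (𝓝[>] x.2) (𝓝 x) :=
    (Continuous.tendsto' (by fun_prop) _ _ rfl).mono_left nhdsWithin_le_nhds
  have hmem : ∀ᶠ t in 𝓝[>] x.2, (x.1, t) ∈ parabStrip ε :=
    hvert.eventually (mem_interior_iff_mem_nhds.1 hx)
  obtain ⟨t, ht, hlt⟩ := (hmem.and self_mem_nhdsWithin).exists
  exact lt_of_lt_of_le hlt ht.2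

theorem lt_upper_of_mem_interior_rightTangentDomain
    (hx : x ∈ interior (rightTangentDomain ε J)) : x.2 < x.1 ^ 2 + ε ^ 2 :=
  lt_upper_of_mem_interior (interior_mono inter_subset_left hx)

theorem exists_mem_interior_uRpt_eq (hε : 0 < ε) (hJ : IsOpen J) {u : ℝ} (hu : u ∈ J) :
    ∃ x ∈ interior (rightTangentDomain ε J), uRpt ε x = u := by
  -- the midpoint of the right tangent segment with parameter `u`
  let x : ℝ × ℝ := (u - ε / 2, (u - ε / 2) ^ 2 + 3 / 4 * ε ^ 2)
  have hxu : uRpt ε x = u := by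
    have hdist : tangencyDist ε x = ε / 2 := by
      rw [tangencyDist, ← sqrt_sq (half_pos hε).le]
      congr 1
      simp only [x]
      ring
    rw [uRpt_eq_sub_tangencyDist, hdist]
    simp only [x]
    ring
  have hopen : IsOpen ({y : ℝ × ℝ | y.1 ^ 2 < y.2} ∩ {y | y.2 < y.1 ^ 2 + ε ^ 2} ∩
      uRpt ε ⁻¹' J) :=
    ((isOpen_lt (by fun_prop) (by fun_prop)).inter (isOpen_lt (by fun_prop) (by fun_prop))).inter
      (hJ.preimage (continuous_uRpt ε))
  have hε₂ : 0 < ε ^ 2 := by positivity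
  refine ⟨x, interior_maximal ?_ hopen ⟨⟨?_, ?_⟩, by rwa [mem_preimage, hxu]⟩, hxu⟩
  · exact fun y hy ↦ ⟨⟨hy.1.1.le, hy.1.2.le⟩, hy.2⟩
  · simp only [x, mem_ofPred_eq]
    linarith
  · simp only [x, mem_ofPred_eq]
    linarith

end RightTangents

section Candidate

/-- The common gradient of `B^R` along the right tangent with parameter `v`, where `m'` stands for
the derivative of `m`. -/
noncomputable def rightTangentGradient (ε : ℝ) (m m' : ℝ → ℝ) (v : ℝ) : ℝ × ℝ →L[ℝ] ℝ :=
  m v • ContinuousLinearMap.fst ℝ ℝ ℝ + (m' v / 2) • rightTangentForm ε v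

/-- The affine function whose graph is tangent to that of `B^R` along the right tangent with
parameter `v`. -/
noncomputable def rightTangentPlane (ε : ℝ) (f m m' : ℝ → ℝ) (v : ℝ) (x : ℝ × ℝ) : ℝ :=
  f v + rightTangentGradient ε m m' v (x - (v, v ^ 2))

variable {ε : ℝ} {J : Set ℝ} {f m m' m'' : ℝ → ℝ} {x : ℝ × ℝ}

theorem BRcand_parabola (hε : 0 ≤ ε) (f m : ℝ → ℝ) (u : ℝ) : BRcand ε f m (u, u ^ 2) = f u := by
  simp [BRcand, uRpt_parabola hε]

theorem rightTangentPlane_uRpt (f m m' : ℝ → ℝ) (hx : x.2 ≤ x.1 ^ 2 + ε ^ 2) :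
    rightTangentPlane ε f m m' (uRpt ε x) x = BRcand ε f m x := by
  simp [rightTangentPlane, rightTangentGradient, BRcand, rightTangentForm_uRpt_sub hx, add_comm]

theorem rightTangentPlane_eq_add (ε : ℝ) (f m m' : ℝ → ℝ) (v : ℝ) (x z : ℝ × ℝ) :
    rightTangentPlane ε f m m' v x =
      rightTangentPlane ε f m m' v z + rightTangentGradient ε m m' v (x - z) := by
  simp only [rightTangentPlane, map_sub]
  ring

theorem hasDerivAt_rightTangentGradient_apply {v : ℝ} (hm : HasDerivAt m (m' v) v)
    (hm' : HasDerivAt m' (m'' v) v) (w : ℝ × ℝ) :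
    HasDerivAt (fun v ↦ rightTangentGradient ε m m' v w)
      (m'' v / 2 * rightTangentForm ε v w) v := by
  have hform : HasDerivAt (fun v ↦ rightTangentForm ε v w) (-(2 * w.1)) v := by
    simp only [rightTangentForm_apply]
    simpa using ((((hasDerivAt_id v).sub_const ε).const_mul 2).mul_const w.1).const_sub w.2
  refine ((hm.mul_const w.1).add ((hm'.div_const 2).mul hform)).congr_deriv ?_
  ring

theorem hasDerivAt_rightTangentPlane {v : ℝ} (hf : HasDerivAt f (ε * m' v + m v) v)
    (hm : HasDerivAt m (m' v) v) (hm' : HasDerivAt m' (m'' v) v) (x : ℝ × ℝ) :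
    HasDerivAt (fun v ↦ rightTangentPlane ε f m m' v x)
      (m'' v / 2 * rightTangentForm ε v (x - (v, v ^ 2))) v := by
  have hform : HasDerivAt (fun v ↦ rightTangentForm ε v (x - (v, v ^ 2)))
      (2 * (v - ε - x.1)) v := by
    simp only [rightTangentForm_apply, Prod.fst_sub, Prod.snd_sub]
    refine (((hasDerivAt_pow 2 v).const_sub x.2).sub ((((hasDerivAt_id v).sub_const ε).const_mul
      2).mul ((hasDerivAt_id v).const_sub x.1))).congr_deriv ?_
    simp only [Nat.cast_ofNat, Nat.add_one_sub_one, pow_one, id]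
    ring
  refine (hf.add ((hm.mul ((hasDerivAt_id v).const_sub x.1)).add
    ((hm'.div_const 2).mul hform))).congr_deriv ?_
  simp only [id]
  ring

theorem BRcand_le_rightTangentPlane {v : ℝ}
    (hf : ∀ u ∈ J, HasDerivAt f (ε * m' u + m u) u) (hm : ∀ u ∈ J, HasDerivAt m (m' u) u)
    (hm' : ∀ u ∈ J, HasDerivAt m' (m'' u) u) (hm'' : ∀ u ∈ J, m'' u ≤ 0)
    (hx : x.2 ≤ x.1 ^ 2 + ε ^ 2) (hJ : uIcc (uRpt ε x) v ⊆ J)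
    (hv : v - ε ≤ x.1 + tangencyDist ε x) :
    BRcand ε f m x ≤ rightTangentPlane ε f m m' v x := by
  rw [← rightTangentPlane_uRpt f m m' hx]
  refine le_of_hasDerivAt_mul_sub (φ := fun v ↦ rightTangentPlane ε f m m' v x)
    (k := fun w ↦ m'' w / 2 * (w - ε - x.1 - tangencyDist ε x)) (fun w hw ↦ ?_) fun w hw ↦ ?_
  · refine (hasDerivAt_rightTangentPlane (hf w (hJ hw)) (hm w (hJ hw)) (hm' w (hJ hw))
      x).congr_deriv ?_
    rw [rightTangentForm_sub_eq_sq_sub_sq hx, uRpt_eq_sub_tangencyDist]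
    ring
  · have hw_le : w ≤ x.1 + ε + tangencyDist ε x := hw.2.trans (sup_le
      (by linarith [uRpt_eq_sub_tangencyDist ε x, tangencyDist_nonneg ε x]) (by linarith))
    exact mul_nonneg_of_nonpos_of_nonpos (by linarith [hm'' w (hJ hw)]) (by linarith)

theorem locallyConcaveOn_BRcand (hf : ∀ u ∈ J, HasDerivAt f (ε * m' u + m u) u)
    (hm : ∀ u ∈ J, HasDerivAt m (m' u) u) (hm' : ∀ u ∈ J, HasDerivAt m' (m'' u) u)
    (hm'' : ∀ u ∈ J, m'' u ≤ 0) :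
    LocallyConcaveOn (rightTangentDomain ε J) (BRcand ε f m) := by
  refine locallyConcaveOn_of_supergradient fun z hz ↦
    ⟨rightTangentGradient ε m m' (uRpt ε z), fun x hseg ↦ ?_⟩
  rw [← rightTangentPlane_uRpt f m m' hz.1.2, ← rightTangentPlane_eq_add]
  exact BRcand_le_rightTangentPlane hf hm hm' hm'' (hseg (left_mem_segment ℝ x z)).1.2
    (uIcc_uRpt_subset hseg) (uRpt_sub_le_add_tangencyDist fun p hp ↦ (hseg hp).1)

theorem hasFDerivAt_BRcand (hf : HasDerivAt f (ε * m' (uRpt ε x) + m (uRpt ε x)) (uRpt ε x))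
    (hm : HasDerivAt m (m' (uRpt ε x)) (uRpt ε x)) (hx : x.2 < x.1 ^ 2 + ε ^ 2) :
    HasFDerivAt (BRcand ε f m) (rightTangentGradient ε m m' (uRpt ε x)) x := by
  have hdist := tangencyDist_pos hx
  have hu := hasFDerivAt_uRpt hx
  have hfst : HasFDerivAt Prod.fst (ContinuousLinearMap.fst ℝ ℝ ℝ) x := hasFDerivAt_fst
  refine (((hm.comp_hasFDerivAt x hu).mul (hfst.sub hu)).add
    (hf.comp_hasFDerivAt x hu)).congr_fderiv ?_
  have hsub : x.1 - uRpt ε x = tangencyDist ε x - ε := by rw [uRpt_eq_sub_tangencyDist]; ring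
  refine ContinuousLinearMap.ext fun w ↦ ?_
  simp only [rightTangentGradient, hsub, add_apply, sub_apply, smul_apply, smul_eq_mul,
    Function.comp_apply, Pi.sub_apply, ContinuousLinearMap.coe_fst']
  field_simp
  ring

theorem hasFDerivAt_BRcand_of_mem_interior (hf : ∀ u ∈ J, HasDerivAt f (ε * m' u + m u) u)
    (hm : ∀ u ∈ J, HasDerivAt m (m' u) u) (hx : x ∈ interior (rightTangentDomain ε J)) :
    HasFDerivAt (BRcand ε f m) (rightTangentGradient ε m m' (uRpt ε x)) x :=
  have hu : uRpt ε x ∈ J := (interior_subset hx).2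
  hasFDerivAt_BRcand (hf _ hu) (hm _ hu) (lt_upper_of_mem_interior_rightTangentDomain hx)

theorem hasFDerivAt_fderiv_BRcand_apply (hf : ∀ u ∈ J, HasDerivAt f (ε * m' u + m u) u)
    (hm : ∀ u ∈ J, HasDerivAt m (m' u) u) (hm' : ∀ u ∈ J, HasDerivAt m' (m'' u) u)
    (hx : x ∈ interior (rightTangentDomain ε J)) (w : ℝ × ℝ) :
    HasFDerivAt (fun y ↦ fderiv ℝ (BRcand ε f m) y w)
      ((m'' (uRpt ε x) / (4 * tangencyDist ε x) * rightTangentForm ε (uRpt ε x) w) •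
        rightTangentForm ε (uRpt ε x)) x := by
  have hu : uRpt ε x ∈ J := (interior_subset hx).2
  have hgrad : (fun y ↦ fderiv ℝ (BRcand ε f m) y w) =ᶠ[𝓝 x]
      (fun v ↦ rightTangentGradient ε m m' v w) ∘ uRpt ε := by
    filter_upwards [isOpen_interior.mem_nhds hx] with y hy
    rw [(hasFDerivAt_BRcand_of_mem_interior hf hm hy).fderiv, Function.comp_apply]
  refine (((hasDerivAt_rightTangentGradient_apply (hm _ hu) (hm' _ hu) w).comp_hasFDerivAt x
    (hasFDerivAt_uRpt (lt_upper_of_mem_interior_rightTangentDomain hx))).congr_of_eventuallyEq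
      hgrad).congr_fderiv ?_
  rw [smul_smul]
  congr 1
  ring

theorem monge_ampere_BRcand (hf : ∀ u ∈ J, HasDerivAt f (ε * m' u + m u) u)
    (hm : ∀ u ∈ J, HasDerivAt m (m' u) u) (hm' : ∀ u ∈ J, HasDerivAt m' (m'' u) u)
    (hx : x ∈ interior (rightTangentDomain ε J)) :
    pd11 (BRcand ε f m) x * pd22 (BRcand ε f m) x - pd12 (BRcand ε f m) x ^ 2 = 0 := by
  have hpd₁ := (hasFDerivAt_fderiv_BRcand_apply hf hm hm' hx (1, 0)).fderiv
  have hpd₂ := (hasFDerivAt_fderiv_BRcand_apply hf hm hm' hx (0, 1)).fderiv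
  unfold pd11 pd12 pd22 pd1 pd2
  rw [hpd₁, hpd₂]
  simp only [smul_apply, smul_eq_mul]
  ring

theorem second_deriv_nonpos_of_locallyConcaveOn_BRcand (hε : 0 < ε) (hJ : IsOpen J)
    (hf : ∀ u ∈ J, HasDerivAt f (ε * m' u + m u) u) (hm : ∀ u ∈ J, HasDerivAt m (m' u) u)
    (hm' : ∀ u ∈ J, HasDerivAt m' (m'' u) u)
    (hB : LocallyConcaveOn (rightTangentDomain ε J) (BRcand ε f m)) {u : ℝ} (hu : u ∈ J) :
    m'' u ≤ 0 := by
  obtain ⟨x, hx, rfl⟩ := exists_mem_interior_uRpt_eq hε hJ hu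
  have hdist := tangencyDist_pos (lt_upper_of_mem_interior_rightTangentDomain hx)
  have hpd₂ : HasFDerivAt (pd2 (BRcand ε f m)) _ x :=
    hasFDerivAt_fderiv_BRcand_apply hf hm hm' hx (0, 1)
  have hpd₂₂ : pd22 (BRcand ε f m) x = m'' (uRpt ε x) / (4 * tangencyDist ε x) := by
    rw [pd22, hpd₂.fderiv]
    simp [rightTangentForm_apply]
  have hdiff : ∀ᶠ y in 𝓝 x, DifferentiableAt ℝ (BRcand ε f m) y := by
    filter_upwards [isOpen_interior.mem_nhds hx] with y hy
    exact (hasFDerivAt_BRcand_of_mem_interior hf hm hy).differentiableAt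
  have hnonpos := hB.pd22_nonpos hx hdiff hpd₂.differentiableAt
  rw [hpd₂₂, div_le_iff₀ (by positivity), zero_mul] at hnonpos
  exact hnonpos

end Candidate

theorem stmt7_general {ε : ℝ} (hε : 0 < ε) {J : Set ℝ} (hJ : IsOpen J) {f m m' m'' : ℝ → ℝ}
    (hf : ∀ u ∈ J, HasDerivAt f (ε * m' u + m u) u) (hm : ∀ u ∈ J, HasDerivAt m (m' u) u)
    (hm' : ∀ u ∈ J, HasDerivAt m' (m'' u) u) :
    (∀ u, BRcand ε f m (u, u ^ 2) = f u) ∧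
    ((∀ x ∈ interior (rightTangentDomain ε J), ∀ y ∈ interior (rightTangentDomain ε J),
        uRpt ε x = uRpt ε y →
        fderiv ℝ (BRcand ε f m) x = fderiv ℝ (BRcand ε f m) y) ∧
      (∀ x ∈ interior (rightTangentDomain ε J),
        pd11 (BRcand ε f m) x * pd22 (BRcand ε f m) x - pd12 (BRcand ε f m) x ^ 2 = 0)) ∧
    (LocallyConcaveOn (rightTangentDomain ε J) (BRcand ε f m) ↔ ∀ u ∈ J, m'' u ≤ 0) := by
  refine ⟨BRcand_parabola hε.le f m, ⟨fun x hx y hy hxy ↦ ?_, fun x hx ↦ ?_⟩, fun hB u hu ↦ ?_,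
    locallyConcaveOn_BRcand hf hm hm'⟩
  · rw [(hasFDerivAt_BRcand_of_mem_interior hf hm hx).fderiv,
      (hasFDerivAt_BRcand_of_mem_interior hf hm hy).fderiv, hxy]
  · exact monge_ampere_BRcand hf hm hm' hx
  · exact second_deriv_nonpos_of_locallyConcaveOn_BRcand hε hJ hf hm hm' hB hu

theorem stmt7 (ε : ℝ) (hε : 0 < ε) (u₁ u₂ : EReal) (hu : u₁ < u₂)
    (f : ℝ → ℝ) (hf : ContDiff ℝ 2 f)
    (m m' m'' : ℝ → ℝ)
    (hm : ∀ u : ℝ, u₁ < (u : EReal) → (u : EReal) < u₂ →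
      HasDerivAt m (m' u) u ∧ HasDerivAt m' (m'' u) u ∧
      ε * m' u + m u = deriv f u) :
    (∀ u : ℝ, u₁ < (u : EReal) → (u : EReal) < u₂ →
      BRcand ε f m (u, u ^ 2) = f u) ∧
    ((∀ x ∈ interior (OmegaR ε u₁ u₂), ∀ y ∈ interior (OmegaR ε u₁ u₂),
        uRpt ε x = uRpt ε y →
        fderiv ℝ (BRcand ε f m) x = fderiv ℝ (BRcand ε f m) y) ∧
      (∀ x ∈ interior (OmegaR ε u₁ u₂),
        pd11 (BRcand ε f m) x * pd22 (BRcand ε f m) x -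
          (pd12 (BRcand ε f m) x) ^ 2 = 0)) ∧
    (LocallyConcaveOn (OmegaR ε u₁ u₂) (BRcand ε f m) ↔
      ∀ u : ℝ, u₁ < (u : EReal) → (u : EReal) < u₂ → m'' u ≤ 0) := by
  have hf' : Differentiable ℝ f := hf.differentiable two_ne_zero
  obtain ⟨hboundary, hinterior, hconcave⟩ := stmt7_general (J := (↑) ⁻¹' Ioo u₁ u₂) hε
    (isOpen_Ioo.preimage continuous_coe_real_ereal)
    (fun u hu ↦ (hm u hu.1 hu.2).2.2 ▸ (hf' u).hasDerivAt)
    (fun u hu ↦ (hm u hu.1 hu.2).1) (fun u hu ↦ (hm u hu.1 hu.2).2.1)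
  exact ⟨fun u _ _ ↦ hboundary u, hinterior, hconcave.trans (forall_congr' fun _ ↦ and_imp)⟩
end
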